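/- arXiv:2010.06236 — 6 statements merged into one kernel-verified Lean document; each statement's English description precedes it below -/
import Mathlib

section
/- If the gain L ∈ ℝ^{m×n} is admissible, then there exists a unique n×n real matrix X satisfying X = 𝒯_L(X) + D; this X is symmetric positive definite, and for every symmetric positive semidefinite initial matrix Σ_0 the closed-loop covariance recursion Σ_{k+1} = 𝒯_L(Σ_k) + D converges to X as k → ∞. -/
open Matrix Filter Topology

/-- The sandwich map `X ↦ M * X * Mᵀ` as a linear endomorphism of `n × n` real matrices. -/
noncomputable def sandwich {n : ℕ} (M : Matrix (Fin n) (Fin n) ℝ) :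
    Module.End ℝ (Matrix (Fin n) (Fin n) ℝ) :=
  (LinearMap.mulLeft ℝ M).comp (LinearMap.mulRight ℝ Mᵀ)

/-- The closed-loop covariance operator
`𝒯_L(X) = (A+BL) X (A+BL)ᵀ + Σᵢ ᾱᵢ Aᵢ X Aᵢᵀ + Σⱼ β̄ⱼ (BⱼL) X (BⱼL)ᵀ`. -/
noncomputable def calT {n m p q : ℕ}
    (A : Matrix (Fin n) (Fin n) ℝ) (A' : Fin p → Matrix (Fin n) (Fin n) ℝ)
    (B : Matrix (Fin n) (Fin m) ℝ) (B' : Fin q → Matrix (Fin n) (Fin m) ℝ)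
    (al : Fin p → ℝ) (be : Fin q → ℝ) (L : Matrix (Fin m) (Fin n) ℝ) :
    Module.End ℝ (Matrix (Fin n) (Fin n) ℝ) :=
  sandwich (A + B * L) + ∑ i, al i • sandwich (A' i) + ∑ j, be j • sandwich (B' j * L)

/-- The (trace-)adjoint operator
`𝒯_L^*(P) = (A+BL)ᵀ P (A+BL) + Σᵢ ᾱᵢ Aᵢᵀ P Aᵢ + Σⱼ β̄ⱼ Lᵀ Bⱼᵀ P Bⱼ L`. -/
noncomputable def calTstar {n m p q : ℕ}
    (A : Matrix (Fin n) (Fin n) ℝ) (A' : Fin p → Matrix (Fin n) (Fin n) ℝ)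
    (B : Matrix (Fin n) (Fin m) ℝ) (B' : Fin q → Matrix (Fin n) (Fin m) ℝ)
    (al : Fin p → ℝ) (be : Fin q → ℝ) (L : Matrix (Fin m) (Fin n) ℝ) :
    Module.End ℝ (Matrix (Fin n) (Fin n) ℝ) :=
  sandwich (A + B * L)ᵀ + ∑ i, al i • sandwich (A' i)ᵀ + ∑ j, be j • sandwich (B' j * L)ᵀ

/-- A gain `L` is admissible if the spectral radius of `𝒯_L`, as a linear endomorphism of
the space of `n × n` real matrices, is strictly less than `1`. -/
noncomputable def Admissible {n m p q : ℕ}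
    (A : Matrix (Fin n) (Fin n) ℝ) (A' : Fin p → Matrix (Fin n) (Fin n) ℝ)
    (B : Matrix (Fin n) (Fin m) ℝ) (B' : Fin q → Matrix (Fin n) (Fin m) ℝ)
    (al : Fin p → ℝ) (be : Fin q → ℝ) (L : Matrix (Fin m) (Fin n) ℝ) : Prop :=
  spectralRadius ℝ (calT A A' B B' al be L) < 1


/-- quadratic form of a matrix -/
noncomputable def qf {n : ℕ} (M : Matrix (Fin n) (Fin n) ℝ) (v : Fin n → ℝ) : ℝ := v ⬝ᵥ (M *ᵥ v)

/-- entrywise absolute sum -/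
noncomputable def nrm1 {n : ℕ} (M : Matrix (Fin n) (Fin n) ℝ) : ℝ := ∑ i, ∑ j, |M i j|

theorem qf_add {n : ℕ} (M N : Matrix (Fin n) (Fin n) ℝ) (v) : qf (M + N) v = qf M v + qf N v := by
  simp [qf, Matrix.add_mulVec]

theorem qf_sub {n : ℕ} (M N : Matrix (Fin n) (Fin n) ℝ) (v) : qf (M - N) v = qf M v - qf N v := by
  simp [qf, Matrix.sub_mulVec]

theorem qf_smul {n : ℕ} (c : ℝ) (M : Matrix (Fin n) (Fin n) ℝ) (v) :
    qf (c • M) v = c * qf M v := by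
  simp [qf, Matrix.smul_mulVec]

theorem qf_bound {n : ℕ} (M : Matrix (Fin n) (Fin n) ℝ) (v : Fin n → ℝ) :
    |qf M v| ≤ nrm1 M * ‖v‖ ^ 2 := by
  have h : qf M v = ∑ i, ∑ j, v i * (M i j * v j) := by
    simp [qf, dotProduct, Matrix.mulVec, Finset.mul_sum]
  rw [h, nrm1, Finset.sum_mul]
  refine (Finset.abs_sum_le_sum_abs _ _).trans (Finset.sum_le_sum fun i _ => ?_)
  rw [Finset.sum_mul]
  refine (Finset.abs_sum_le_sum_abs _ _).trans (Finset.sum_le_sum fun j _ => ?_)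
  rw [abs_mul, abs_mul]
  have h1 : |v i| ≤ ‖v‖ := norm_le_pi_norm v i
  have h2 : |v j| ≤ ‖v‖ := norm_le_pi_norm v j
  calc |v i| * (|M i j| * |v j|) = |M i j| * (|v i| * |v j|) := by ring
    _ ≤ |M i j| * (‖v‖ * ‖v‖) := by gcongr
    _ = _ := by ring

theorem qf_smul_vec {n : ℕ} (c : ℝ) (M : Matrix (Fin n) (Fin n) ℝ) (v) :
    qf M (c • v) = c ^ 2 * qf M v := by
  simp [qf, Matrix.mulVec_smul]; ring

theorem psd_iff {n : ℕ} (M : Matrix (Fin n) (Fin n) ℝ) :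
    M.PosSemidef ↔ Mᵀ = M ∧ ∀ v, 0 ≤ qf M v := by
  rw [Matrix.posSemidef_iff_dotProduct_mulVec, Matrix.IsHermitian,
    Matrix.conjTranspose_eq_transpose_of_trivial]
  simp [qf]

theorem posDef_lower {n : ℕ} {D : Matrix (Fin n) (Fin n) ℝ} (hD : D.PosDef) :
    ∃ c > 0, ∀ v, c * ‖v‖ ^ 2 ≤ qf D v := by
  have hc : Continuous (qf D) := by unfold qf; fun_prop
  rcases (Metric.sphere (0 : Fin n → ℝ) 1).eq_empty_or_nonempty with he | hne
  · refine ⟨1, one_pos, fun v => ?_⟩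
    have : v = 0 := by
      by_contra hv
      have : (‖v‖⁻¹ • v) ∈ Metric.sphere (0 : Fin n → ℝ) 1 := by
        simp [norm_smul, hv]
      rw [he] at this; exact this
    simp [this, qf]
  · obtain ⟨w, hw, hmin⟩ := (isCompact_sphere (0 : Fin n → ℝ) 1).exists_isMinOn hne hc.continuousOn
    have hw0 : w ≠ 0 := by rintro rfl; simp at hw
    refine ⟨qf D w, by simpa [qf] using hD.dotProduct_mulVec_pos hw0, fun v => ?_⟩
    by_cases hv : v = 0
    · simp [hv, qf]
    have hn : 0 < ‖v‖ := norm_pos_iff.2 hv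
    have hm : (‖v‖⁻¹ • v) ∈ Metric.sphere (0 : Fin n → ℝ) 1 := by
      simp [norm_smul, hv]
    have h1 : qf D w ≤ qf D (‖v‖⁻¹ • v) := hmin hm
    rw [qf_smul_vec] at h1
    calc qf D w * ‖v‖ ^ 2 ≤ (‖v‖⁻¹ ^ 2 * qf D v) * ‖v‖ ^ 2 := by gcongr
      _ = qf D v := by field_simp

theorem exists_resolvent_path {E : Type*} [NormedAddCommGroup E] [NormedSpace ℝ E]
    [FiniteDimensional ℝ E] (T : Module.End ℝ E)
    (hT : ∀ t ∈ Set.Icc (0 : ℝ) 1, IsUnit (1 - t • T)) (D : E) :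
    ∃ X : ℝ → E, ContinuousOn X (Set.Icc 0 1) ∧ ∀ t ∈ Set.Icc (0 : ℝ) 1, X t = t • T (X t) + D := by
  have : CompleteSpace E := FiniteDimensional.complete ℝ E
  let T' : E →L[ℝ] E := LinearMap.toContinuousLinearMap T
  have hU : ∀ t ∈ Set.Icc (0 : ℝ) 1, IsUnit (1 - t • T') := by
    intro t ht
    obtain ⟨u, hu⟩ := hT t ht
    refine ⟨⟨1 - t • T', LinearMap.toContinuousLinearMap (↑u⁻¹ : Module.End ℝ E), ?_, ?_⟩, rfl⟩
    · ext x
      have := LinearMap.congr_fun (u.mul_inv) x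
      rw [hu] at this
      simpa [T'] using this
    · ext x
      have := LinearMap.congr_fun (u.inv_mul) x
      rw [hu] at this
      simpa [T'] using this
  refine ⟨fun t => Ring.inverse (1 - t • T') D, ?_, ?_⟩
  · intro t ht
    obtain ⟨u, hu⟩ := hU t ht
    have h1 := NormedRing.inverse_continuousAt u
    rw [hu] at h1
    have h2 : ContinuousAt (fun t : ℝ => Ring.inverse (1 - t • T')) t :=
      ContinuousAt.comp (f := fun t : ℝ => 1 - t • T') h1 (by fun_prop)
    exact (h2.clm_apply continuousAt_const).continuousWithinAt
  · intro t ht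
    have h := Ring.mul_inverse_cancel _ (hU t ht)
    have h2 := congrArg (fun F : E →L[ℝ] E => F D) h
    change Ring.inverse (1 - t • T') D - t • T' (Ring.inverse (1 - t • T') D) = D at h2
    rw [sub_eq_iff_eq_add] at h2
    change _ = t • T' _ + D
    rw [add_comm]; exact h2

theorem isUnit_of_spectralRadius {E : Type*} [AddCommGroup E] [Module ℝ E] (T : Module.End ℝ E)
    (h : spectralRadius ℝ T < 1) : ∀ t ∈ Set.Icc (0 : ℝ) 1, IsUnit (1 - t • T) := by
  intro t ht
  rcases ht.1.eq_or_lt with h0 | h0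
  · simp [← h0]
  have hm : t⁻¹ ∉ spectrum ℝ T := by
    intro hmem
    have h1 : (‖t⁻¹‖₊ : ENNReal) ≤ spectralRadius ℝ T := le_iSup₂ (f := fun k (_ : k ∈ spectrum ℝ T) => (‖k‖₊ : ENNReal)) _ hmem
    have h2 : (1 : ENNReal) ≤ (‖t⁻¹‖₊ : ENNReal) := by
      have : (1 : ℝ) ≤ ‖t⁻¹‖ := by
        rw [norm_inv, Real.norm_of_nonneg ht.1]
        exact (one_le_inv₀ h0).2 ht.2
      exact_mod_cast this
    exact absurd h (not_lt.2 (h2.trans h1))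
  rw [spectrum.notMem_iff] at hm
  have : 1 - t • T = (Units.mk0 t h0.ne') • (algebraMap ℝ (Module.End ℝ E) t⁻¹ - T) := by
    ext x
    simp [Units.smul_def, smul_sub, smul_smul, h0.ne', Module.algebraMap_end_apply]
  rw [this]
  exact hm.smul _

theorem calT_psd {n m p q : ℕ}
    (A : Matrix (Fin n) (Fin n) ℝ) (A' : Fin p → Matrix (Fin n) (Fin n) ℝ)
    (B : Matrix (Fin n) (Fin m) ℝ) (B' : Fin q → Matrix (Fin n) (Fin m) ℝ)
    (al : Fin p → ℝ) (be : Fin q → ℝ) (hal : ∀ i, 0 ≤ al i) (hbe : ∀ j, 0 ≤ be j)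
    (L : Matrix (Fin m) (Fin n) ℝ) {X : Matrix (Fin n) (Fin n) ℝ} (hX : X.PosSemidef) :
    (calT A A' B B' al be L X).PosSemidef := by
  have hs : ∀ M : Matrix (Fin n) (Fin n) ℝ, (sandwich M X).PosSemidef := by
    intro M
    have := hX.mul_mul_conjTranspose_same M
    rw [Matrix.conjTranspose_eq_transpose_of_trivial] at this
    simpa [sandwich, Matrix.mul_assoc] using this
  simp only [calT, LinearMap.add_apply, LinearMap.sum_apply, LinearMap.smul_apply]
  refine ((hs _).add ?_).add ?_
  · exact Matrix.posSemidef_sum _ fun i _ => (hs _).smul (hal i)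
  · exact Matrix.posSemidef_sum _ fun i _ => (hs _).smul (hbe i)

theorem calT_transpose {n m p q : ℕ}
    (A : Matrix (Fin n) (Fin n) ℝ) (A' : Fin p → Matrix (Fin n) (Fin n) ℝ)
    (B : Matrix (Fin n) (Fin m) ℝ) (B' : Fin q → Matrix (Fin n) (Fin m) ℝ)
    (al : Fin p → ℝ) (be : Fin q → ℝ)
    (L : Matrix (Fin m) (Fin n) ℝ) (X : Matrix (Fin n) (Fin n) ℝ) :
    calT A A' B B' al be L Xᵀ = (calT A A' B B' al be L X)ᵀ := by
  have hs : ∀ M : Matrix (Fin n) (Fin n) ℝ, sandwich M Xᵀ = (sandwich M X)ᵀ := by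
    intro M
    simp [sandwich, Matrix.mul_assoc, Matrix.transpose_mul]
  simp only [calT, LinearMap.add_apply, LinearMap.sum_apply, LinearMap.smul_apply, hs,
    Matrix.transpose_add, Matrix.transpose_sum, Matrix.transpose_smul]

theorem qf_entry {n : ℕ} (M : Matrix (Fin n) (Fin n) ℝ) (hM : Mᵀ = M) (i j : Fin n) :
    M i j = (qf M (Pi.single i 1 + Pi.single j 1) - qf M (Pi.single i 1)
      - qf M (Pi.single j 1)) / 2 := by
  have : M j i = M i j := congrFun (congrFun hM i) j
  simp [qf, Matrix.mulVec_add, add_dotProduct, this]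
  ring

attribute [local instance] Matrix.normedAddCommGroup Matrix.normedSpace in
/-- the abstract core: positive operators commuting with transpose -/
theorem core {n : ℕ} (T : Module.End ℝ (Matrix (Fin n) (Fin n) ℝ))
    (hpos : ∀ X : Matrix (Fin n) (Fin n) ℝ, X.PosSemidef → (T X).PosSemidef)
    (htr : ∀ X, T Xᵀ = (T X)ᵀ)
    (hT : ∀ t ∈ Set.Icc (0 : ℝ) 1, IsUnit (1 - t • T))
    (D : Matrix (Fin n) (Fin n) ℝ) (hD : D.PosDef) :
    ∃ X : Matrix (Fin n) (Fin n) ℝ, X = T X + D ∧ X.PosDef := by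
  obtain ⟨X, hXc, hX⟩ := exists_resolvent_path T hT D
  have hsym : ∀ t ∈ Set.Icc (0 : ℝ) 1, (X t)ᵀ = X t := by
    intro t ht
    obtain ⟨u, hu⟩ := hT t ht
    have hinj : Function.Injective (1 - t • T : Module.End ℝ (Matrix (Fin n) (Fin n) ℝ)) :=
      ((Module.End.isUnit_iff _).1 (hT t ht)).1
    have hDs : Dᵀ = D := by
      have := hD.isHermitian
      rwa [Matrix.IsHermitian, Matrix.conjTranspose_eq_transpose_of_trivial] at this
    apply hinj
    have h1 : X t - t • T (X t) = D := by
      rw [sub_eq_iff_eq_add, add_comm]; exact hX t ht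
    have h2 := congrArg Matrix.transpose h1
    rw [Matrix.transpose_sub, Matrix.transpose_smul, ← htr, hDs] at h2
    simp only [LinearMap.sub_apply, Module.End.one_apply, LinearMap.smul_apply]
    rw [h1, h2]
  obtain ⟨c, hc, hcD⟩ := posDef_lower hD
  have hqc : ∀ v, Continuous fun M : Matrix (Fin n) (Fin n) ℝ => qf M v := by
    intro v; unfold qf; fun_prop
  have hsub : Set.Icc (0 : ℝ) 1 ⊆ {t | ∀ v, 0 ≤ qf (X t) v} := by
    apply IsClosed.Icc_subset_of_forall_mem_nhdsWithin
    · have : {t | ∀ v, 0 ≤ qf (X t) v} ∩ Set.Icc (0 : ℝ) 1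
          = Set.Icc (0 : ℝ) 1 ∩ X ⁻¹' {M | ∀ v, 0 ≤ qf M v} := by
        ext t; simp [and_comm]
      rw [this]
      refine hXc.preimage_isClosed_of_isClosed isClosed_Icc ?_
      simp only [Set.ofPred_forall]
      exact isClosed_iInter fun v => isClosed_le continuous_const (hqc v)
    · have h0 := hX 0 (by simp)
      simp only [zero_smul, zero_add] at h0
      intro v
      rw [h0]
      exact ((psd_iff D).1 hD.posSemidef).2 v
    · rintro t ⟨ht, ht01⟩
      have htI : t ∈ Set.Icc (0 : ℝ) 1 := Set.Ico_subset_Icc_self ht01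
      have hpsd : (X t).PosSemidef := (psd_iff _).2 ⟨hsym t htI, ht⟩
      have hlow : ∀ v, c * ‖v‖ ^ 2 ≤ qf (X t) v := by
        intro v
        rw [hX t htI, qf_add, qf_smul]
        have := mul_nonneg htI.1 (((psd_iff _).1 (hpos _ hpsd)).2 v)
        linarith [hcD v]
      have hcont : ContinuousWithinAt (fun s => nrm1 (X s - X t)) (Set.Icc 0 1) t := by
        have hn : Continuous fun M : Matrix (Fin n) (Fin n) ℝ => nrm1 (M - X t) := by
          unfold nrm1; fun_prop
        exact hn.continuousAt.comp_continuousWithinAt (hXc t htI)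
      have hev : ∀ᶠ s in 𝓝[Set.Icc 0 1] t, nrm1 (X s - X t) < c := by
        apply hcont.eventually_lt_const
        simpa [nrm1] using hc
      have hle : 𝓝[>] t ≤ 𝓝[Set.Icc 0 1] t := by
        rw [← nhdsWithin_Ioc_eq_nhdsGT ht01.2]
        exact nhdsWithin_mono _ fun s hs => ⟨ht01.1.trans hs.1.le, hs.2⟩
      filter_upwards [hle hev] with s hs v
      have h1 := qf_bound (X s - X t) v
      rw [qf_sub] at h1
      have h2 := (abs_le.1 h1).1
      have h3 : nrm1 (X s - X t) * ‖v‖ ^ 2 ≤ c * ‖v‖ ^ 2 := by gcongr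
      linarith [hlow v]
  have h1 : (1 : ℝ) ∈ Set.Icc (0 : ℝ) 1 := by simp
  have hpsd : (X 1).PosSemidef := (psd_iff _).2 ⟨hsym 1 h1, hsub h1⟩
  have h2 := hX 1 h1
  rw [one_smul] at h2
  refine ⟨X 1, h2, ?_⟩
  rw [h2]
  exact hD.posSemidef_add (hpos _ hpsd)

theorem core_conv {n : ℕ} (T : Module.End ℝ (Matrix (Fin n) (Fin n) ℝ))
    (hpos : ∀ X : Matrix (Fin n) (Fin n) ℝ, X.PosSemidef → (T X).PosSemidef)
    (D X : Matrix (Fin n) (Fin n) ℝ) (hD : D.PosDef) (hX : X = T X + D) (hXp : X.PosDef)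
    (Z : ℕ → Matrix (Fin n) (Fin n) ℝ) (hZ0 : (Z 0)ᵀ = Z 0) (hZ : ∀ k, Z (k + 1) = T (Z k)) :
    Tendsto Z atTop (𝓝 0) := by
  have hXs := ((psd_iff X).1 hXp.posSemidef).1
  have hDs := ((psd_iff D).1 hD.posSemidef).1
  have hnn : ∀ M : Matrix (Fin n) (Fin n) ℝ, 0 ≤ nrm1 M := fun M => by unfold nrm1; positivity
  obtain ⟨c, hc, hcD⟩ := posDef_lower hD
  obtain ⟨d, hd, hdX⟩ := posDef_lower hXp
  -- contraction factor
  obtain ⟨r, hr0, hr1, hr⟩ : ∃ r : ℝ, 0 ≤ r ∧ r < 1 ∧ (r • X - T X).PosSemidef := by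
    set e := c / (nrm1 X + c) with he
    have hN := hnn X
    have he0 : 0 < e := by positivity
    have he1 : e ≤ 1 := by rw [he, div_le_one (by positivity)]; linarith
    have heN : e * nrm1 X ≤ c := by
      rw [he, div_mul_eq_mul_div, div_le_iff₀ (by positivity)]; nlinarith
    refine ⟨1 - e, by linarith, by linarith, ?_⟩
    have h1 : (1 - e) • X - T X = D - e • X := by
      have : T X = X - D := by rw [eq_sub_iff_add_eq]; exact hX.symm
      rw [this, sub_smul, one_smul]; abel
    rw [h1, psd_iff]
    refine ⟨by simp [hXs, hDs], fun v => ?_⟩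
    rw [qf_sub, qf_smul]
    have h2 := (abs_le.1 (qf_bound X v)).2
    have h3 : e * qf X v ≤ e * (nrm1 X * ‖v‖ ^ 2) := by gcongr
    have h4 : e * nrm1 X * ‖v‖ ^ 2 ≤ c * ‖v‖ ^ 2 := by gcongr
    linarith [hcD v]
  have key : ∀ Y : ℕ → Matrix (Fin n) (Fin n) ℝ, (∀ k, Y (k + 1) = T (Y k)) →
      ∀ C : ℝ, 0 ≤ C → (C • X - Y 0).PosSemidef → ∀ k, ((C * r ^ k) • X - Y k).PosSemidef := by
    intro Y hY C hC h0 k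
    induction k with
    | zero => simpa using h0
    | succ k ih =>
      have h1 := (hpos _ ih).add (hr.smul (show 0 ≤ C * r ^ k by positivity))
      rw [map_sub, map_smul, ← hY, smul_sub, smul_smul] at h1
      convert h1 using 1
      rw [pow_succ, mul_assoc]; abel
  set C := nrm1 (Z 0) / d with hC
  have hC0 : 0 ≤ C := div_nonneg (hnn _) hd.le
  have hCd : C * d = nrm1 (Z 0) := by rw [hC]; field_simp
  have hb : ∀ v, |qf (Z 0) v| ≤ C * qf X v := by
    intro v
    calc _ ≤ nrm1 (Z 0) * ‖v‖ ^ 2 := qf_bound _ v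
      _ = C * (d * ‖v‖ ^ 2) := by rw [← hCd]; ring
      _ ≤ _ := by gcongr; exact hdX v
  have k1 := key Z hZ C hC0 (by
    rw [psd_iff]
    refine ⟨by simp [hXs, hZ0], fun v => ?_⟩
    rw [qf_sub, qf_smul]; linarith [(abs_le.1 (hb v)).2])
  have k2 := key (fun k => (-1 : ℝ) • Z k) (fun k => by simp [hZ]) C hC0 (by
    rw [psd_iff]
    refine ⟨by simp [hXs, hZ0], fun v => ?_⟩
    rw [qf_sub, qf_smul, qf_smul]; linarith [(abs_le.1 (hb v)).1])
  have hZs : ∀ k, (Z k)ᵀ = Z k := by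
    intro k
    have := ((psd_iff _).1 (k1 k)).1
    rw [Matrix.transpose_sub, Matrix.transpose_smul, hXs] at this
    exact sub_right_injective this
  have hq : ∀ v, Tendsto (fun k => qf (Z k) v) atTop (𝓝 0) := by
    intro v
    have ht : Tendsto (fun k => (C * r ^ k) * qf X v) atTop (𝓝 0) := by
      have := ((tendsto_pow_atTop_nhds_zero_of_lt_one hr0 hr1).const_mul C).mul_const (qf X v)
      simpa using this
    refine squeeze_zero_norm (fun k => ?_) ht
    have a1 := ((psd_iff _).1 (k1 k)).2 v
    have a2 := ((psd_iff _).1 (k2 k)).2 v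
    rw [qf_sub, qf_smul] at a1
    rw [qf_sub, qf_smul, qf_smul] at a2
    rw [Real.norm_eq_abs, abs_le]
    constructor <;> linarith
  refine tendsto_pi_nhds.2 fun i => tendsto_pi_nhds.2 fun j => ?_
  have := (((hq (Pi.single i 1 + Pi.single j 1)).sub (hq (Pi.single i 1))).sub
    (hq (Pi.single j 1))).div_const 2
  simp only [← qf_entry _ (hZs _)] at this
  simpa using this

theorem stmt1 {n m p q : ℕ} (hn : 0 < n) (hm : 0 < m)
    (A : Matrix (Fin n) (Fin n) ℝ) (A' : Fin p → Matrix (Fin n) (Fin n) ℝ)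
    (B : Matrix (Fin n) (Fin m) ℝ) (B' : Fin q → Matrix (Fin n) (Fin m) ℝ)
    (al : Fin p → ℝ) (be : Fin q → ℝ) (hal : ∀ i, 0 ≤ al i) (hbe : ∀ j, 0 ≤ be j)
    (D : Matrix (Fin n) (Fin n) ℝ) (hD : D.PosDef)
    (L : Matrix (Fin m) (Fin n) ℝ)
    (hadm : Admissible A A' B B' al be L) :
    ∃ X : Matrix (Fin n) (Fin n) ℝ,
      X = calT A A' B B' al be L X + D ∧
      (∀ Y : Matrix (Fin n) (Fin n) ℝ, Y = calT A A' B B' al be L Y + D → Y = X) ∧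
      X.PosDef ∧
      ∀ S : ℕ → Matrix (Fin n) (Fin n) ℝ, (S 0).PosSemidef →
        (∀ k, S (k + 1) = calT A A' B B' al be L (S k) + D) →
        Filter.Tendsto S Filter.atTop (nhds X) := by
  have hT := isUnit_of_spectralRadius _ hadm
  have hpos : ∀ X : Matrix (Fin n) (Fin n) ℝ, X.PosSemidef →
      (calT A A' B B' al be L X).PosSemidef :=
    fun X hX => calT_psd A A' B B' al be hal hbe L hX
  have htr := calT_transpose A A' B B' al be L
  generalize calT A A' B B' al be L = T at *
  obtain ⟨X, hX, hXp⟩ := core T hpos htr hT D hD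
  refine ⟨X, hX, ?_, hXp, ?_⟩
  · intro Y hY
    have hinj : Function.Injective ((1 : Module.End ℝ (Matrix (Fin n) (Fin n) ℝ)) - (1 : ℝ) • T) :=
      ((Module.End.isUnit_iff _).1 (hT 1 (by simp))).1
    apply hinj
    simp only [LinearMap.sub_apply, Module.End.one_apply, one_smul]
    rw [sub_eq_iff_eq_add.2 (hY.trans (add_comm _ _)), sub_eq_iff_eq_add.2 (hX.trans (add_comm _ _))]
  · intro S hS0 hS
    have h := core_conv T hpos D X hD hX hXp (fun k => S k - X) ?_ ?_
    · have := h.add_const X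
      simpa using this
    · simp [((psd_iff _).1 hS0).1, ((psd_iff _).1 hXp.posSemidef).1]
    · intro k
      change S (k + 1) - X = T (S k - X)
      rw [hS k, map_sub]
      nth_rewrite 1 [hX]
      abel
end

section
/- If the gain L ∈ ℝ^{m×n} is admissible, then the stochastic Lyapunov equation P = 𝒯_L^*(P) + Q + Lᵀ R L has a unique solution P among n×n real matrices; this P is symmetric positive semidefinite and is given by the convergent series P = Σ_{t=0}^∞ (𝒯_L^*)^t(Q + Lᵀ R L). -/
open Matrix Filter Topology

theorem psd_of_entries {n : ℕ} (D : Matrix (Fin n) (Fin n) ℝ) (hD : Dᵀ = D) (ε : ℝ)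
    (h : ∀ i j, |D i j| ≤ ε) : (((n : ℝ) * ε) • (1 : Matrix (Fin n) (Fin n) ℝ) + D).PosSemidef := by
  refine Matrix.PosSemidef.of_dotProduct_mulVec_nonneg ?_ ?_
  · rw [Matrix.IsHermitian, Matrix.conjTranspose_eq_transpose_of_trivial]
    simp [hD]
  · intro x
    have e : star x ⬝ᵥ (((n : ℝ) * ε) • (1 : Matrix (Fin n) (Fin n) ℝ) + D) *ᵥ x
        = (n : ℝ) * ε * ∑ i, x i ^ 2 + ∑ i, ∑ j, x i * D i j * x j := by
      rw [Matrix.add_mulVec, dotProduct_add, Matrix.smul_mulVec, Matrix.one_mulVec, dotProduct_smul]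
      simp only [star_trivial, dotProduct, Matrix.mulVec, smul_eq_mul, Finset.mul_sum]
      congr 1
      · exact Finset.sum_congr rfl fun i _ => by ring
      · exact Finset.sum_congr rfl fun i _ => Finset.sum_congr rfl fun j _ => by ring
    have e2 : (n : ℝ) * ε * ∑ i, x i ^ 2 = ∑ i : Fin n, ∑ j : Fin n, ε * (x i ^ 2 + x j ^ 2) / 2 := by
      simp only [mul_add, add_div, Finset.sum_add_distrib, Finset.sum_const, Finset.card_univ,
        Fintype.card_fin, nsmul_eq_mul]
      rw [← Finset.mul_sum, ← Finset.sum_div, ← Finset.mul_sum]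
      ring
    rw [e, e2, ← Finset.sum_add_distrib]
    refine Finset.sum_nonneg fun i _ => ?_
    rw [← Finset.sum_add_distrib]
    refine Finset.sum_nonneg fun j _ => ?_
    have h1 := abs_le.1 (h i j)
    nlinarith [mul_nonneg (by linarith : 0 ≤ ε - D i j) (sq_nonneg (x i - x j)),
      mul_nonneg (by linarith : 0 ≤ ε + D i j) (sq_nonneg (x i + x j))]

theorem psd_symm {n : ℕ} {M : Matrix (Fin n) (Fin n) ℝ} (hM : M.PosSemidef) : Mᵀ = M := by
  have := hM.isHermitian
  rwa [Matrix.IsHermitian, Matrix.conjTranspose_eq_transpose_of_trivial] at this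

theorem psd_entry_le {n : ℕ} (M : Matrix (Fin n) (Fin n) ℝ) (hM : M.PosSemidef) (i j : Fin n) :
    |M i j| ≤ M.trace := by
  have hs : M j i = M i j := congrFun (congrFun (psd_symm hM) i) j
  have hd : ∀ k, 0 ≤ M k k := fun k => hM.diag_nonneg
  have key : ∀ c : ℝ, 0 ≤ M i i + c * M i j + c * M j i + c * c * M j j := by
    intro c
    have := hM.dotProduct_mulVec_nonneg (Pi.single i 1 + c • Pi.single j 1)
    simp [Matrix.mulVec_add, Matrix.mulVec_smul, add_dotProduct, dotProduct_add] at this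
    linarith
  have hl : ∀ k, M k k ≤ M.trace := fun k =>
    Finset.single_le_sum (f := fun k => M k k) (fun k _ => hd k) (Finset.mem_univ k)
  have k1 := key 1
  have k2 := key (-1)
  have := hl i
  have := hl j
  rw [abs_le]; constructor <;> linarith

theorem psd_closed {n : ℕ} : IsClosed {M : Matrix (Fin n) (Fin n) ℝ | M.PosSemidef} := by
  have : {M : Matrix (Fin n) (Fin n) ℝ | M.PosSemidef} =
      {M | Mᵀ = M} ∩ ⋂ x : Fin n → ℝ, {M | 0 ≤ x ⬝ᵥ M *ᵥ x} := by
    ext M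
    simp only [Set.mem_ofPred_eq, Set.mem_inter_iff, Set.mem_iInter]
    constructor
    · intro h
      exact ⟨psd_symm h, fun x => by simpa using h.dotProduct_mulVec_nonneg x⟩
    · rintro ⟨h, h'⟩
      refine Matrix.PosSemidef.of_dotProduct_mulVec_nonneg ?_ (fun x => by simpa using h' x)
      rwa [Matrix.IsHermitian, Matrix.conjTranspose_eq_transpose_of_trivial]
  rw [this]
  refine IsClosed.inter (isClosed_eq (by fun_prop) continuous_id) (isClosed_iInter fun x => ?_)
  exact isClosed_le continuous_const (by fun_prop)

theorem exists_path_gen {E : Type*} [NormedAddCommGroup E] [NormedSpace ℝ E]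
    [FiniteDimensional ℝ E] (f : Module.End ℝ E) (C : E)
    (hinj : ∀ s ∈ Set.Icc (0 : ℝ) 1, ∀ X, X = s • f X → X = 0) :
    ∃ W : ℝ → E, ContinuousOn W (Set.Icc 0 1) ∧
      ∀ s ∈ Set.Icc (0 : ℝ) 1, W s = s • f (W s) + C := by
  have : CompleteSpace E := FiniteDimensional.complete ℝ E
  let F : E →L[ℝ] E := LinearMap.toContinuousLinearMap f
  have hF : ∀ X, F X = f X := fun X => rfl
  have hu : ∀ s ∈ Set.Icc (0 : ℝ) 1, IsUnit (1 - s • F) := by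
    intro s hs
    rw [ContinuousLinearMap.isUnit_iff_bijective]
    have hi : Function.Injective ((1 - s • F : E →L[ℝ] E) : E →ₗ[ℝ] E) := by
      rw [← LinearMap.ker_eq_bot, LinearMap.ker_eq_bot']
      intro X hX
      refine hinj s hs X ?_
      simpa [sub_eq_zero, hF] using hX
    exact ⟨hi, LinearMap.surjective_of_injective hi⟩
  refine ⟨fun s => Ring.inverse (1 - s • F) C, ?_, ?_⟩
  · intro s hs
    obtain ⟨u, hu'⟩ := hu s hs
    have h1 : ContinuousAt Ring.inverse (1 - s • F) := hu' ▸ NormedRing.inverse_continuousAt u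
    have h2 : ContinuousAt (fun s : ℝ => Ring.inverse (1 - s • F)) s :=
      ContinuousAt.comp (f := fun s : ℝ => 1 - s • F) h1 (by fun_prop)
    exact (h2.clm_apply continuousAt_const).continuousWithinAt
  · intro s hs
    have := congrArg (fun G => G C) (Ring.mul_inverse_cancel _ (hu s hs))
    simp [sub_eq_iff_eq_add, hF] at this
    rw [add_comm]
    exact this

attribute [local instance] Matrix.normedAddCommGroup Matrix.normedSpace in
theorem exists_path {n : ℕ} (f : Module.End ℝ (Matrix (Fin n) (Fin n) ℝ))
    (C : Matrix (Fin n) (Fin n) ℝ)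
    (hinj : ∀ s ∈ Set.Icc (0 : ℝ) 1, ∀ X, X = s • f X → X = 0) :
    ∃ W : ℝ → Matrix (Fin n) (Fin n) ℝ, ContinuousOn W (Set.Icc 0 1) ∧
      ∀ s ∈ Set.Icc (0 : ℝ) 1, W s = s • f (W s) + C :=
  exists_path_gen f C hinj

theorem exists_psd_sol {n : ℕ} (f : Module.End ℝ (Matrix (Fin n) (Fin n) ℝ))
    (hpos : ∀ X, X.PosSemidef → (f X).PosSemidef) (htr : ∀ X, f Xᵀ = (f X)ᵀ)
    (hinj : ∀ s ∈ Set.Icc (0 : ℝ) 1, ∀ X, X = s • f X → X = 0) :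
    ∃ W : Matrix (Fin n) (Fin n) ℝ, W.PosSemidef ∧ W = f W + 1 := by
  obtain ⟨W, hc, hW⟩ := exists_path f 1 hinj
  have hsym : ∀ s ∈ Set.Icc (0 : ℝ) 1, (W s)ᵀ = W s := by
    intro s hs
    rw [← sub_eq_zero]
    refine hinj s hs _ ?_
    have h1 := hW s hs
    have h2 := congrArg Matrix.transpose h1
    rw [Matrix.transpose_add, Matrix.transpose_smul, ← htr, Matrix.transpose_one] at h2
    rw [map_sub, smul_sub]
    refine (congrArg₂ (· - ·) h2 h1).trans ?_
    exact add_sub_add_right_eq_sub _ _ _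
  have key : Set.Icc (0:ℝ) 1 ⊆ {s | (W s).PosSemidef} := by
    refine IsClosed.Icc_subset_of_forall_mem_nhdsWithin ?_ ?_ ?_
    · rw [Set.inter_comm]
      exact hc.preimage_isClosed_of_isClosed isClosed_Icc psd_closed
    · have := hW 0 (by simp)
      simp only [zero_smul, zero_add] at this
      simp only [Set.mem_ofPred_eq, this]
      exact Matrix.PosSemidef.one
    · rintro s ⟨hs, hsI⟩
      have hsI' : s ∈ Set.Icc (0:ℝ) 1 := ⟨hsI.1, hsI.2.le⟩
      have hcs : Tendsto W (𝓝[>] s) (𝓝 (W s)) :=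
        (hc s hsI').mono_left (nhdsWithin_le_of_mem
          (mem_of_superset (Ioc_mem_nhdsGT hsI.2) fun y hy => ⟨hsI.1.trans hy.1.le, hy.2⟩))
      have hn : (0:ℝ) < 1 / (n + 1) := by positivity
      have hev : ∀ i j, ∀ᶠ t in 𝓝[>] s, |(W t - W s) i j| ≤ 1 / ((n:ℝ) + 1) := by
        intro i j
        have : Tendsto (fun t => W t i j) (𝓝[>] s) (𝓝 (W s i j)) :=
          ((continuous_apply_apply i j).tendsto (W s)).comp hcs
        filter_upwards [Metric.tendsto_nhds.1 this _ hn] with t ht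
        exact ht.le
      have hev' : ∀ᶠ t in 𝓝[>] s, ∀ i j, |(W t - W s) i j| ≤ 1 / ((n:ℝ) + 1) :=
        eventually_all.2 fun i => eventually_all.2 fun j => hev i j
      filter_upwards [hev', Ioc_mem_nhdsGT hsI.2] with t ht htI
      have htI' : t ∈ Set.Icc (0:ℝ) 1 := ⟨hsI.1.trans htI.1.le, htI.2⟩
      have h1 := psd_of_entries (W t - W s) (by rw [Matrix.transpose_sub, hsym t htI', hsym s hsI']) _ ht
      have h2 : (s • f (W s)).PosSemidef := (hpos _ hs).smul hsI.1
      have h3 : ((1 - (n:ℝ) * (1 / (n + 1))) • (1 : Matrix (Fin n) (Fin n) ℝ)).PosSemidef := by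
        refine Matrix.PosSemidef.one.smul ?_
        have : 1 - (n:ℝ) * (1 / (n + 1)) = 1 / (n+1) := by field_simp; ring
        rw [this]; exact hn.le
      have h4 := (h1.add h2).add h3
      have h5 := hW s hsI'
      have : W t = (n * (1 / ((n:ℝ) + 1))) • (1 : Matrix (Fin n) (Fin n) ℝ) + (W t - W s) + s • f (W s)
          + (1 - n * (1 / ((n:ℝ) + 1))) • (1 : Matrix (Fin n) (Fin n) ℝ) := by
        rw [sub_smul, one_smul, eq_sub_of_add_eq h5.symm]; abel
      rw [this]; exact h4
  refine ⟨W 1, key (by simp), ?_⟩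
  simpa using hW 1 (by simp)

theorem psd_pow {n : ℕ} (f : Module.End ℝ (Matrix (Fin n) (Fin n) ℝ))
    (hpos : ∀ X, X.PosSemidef → (f X).PosSemidef) (X : Matrix (Fin n) (Fin n) ℝ)
    (hX : X.PosSemidef) (t : ℕ) : ((f ^ t) X).PosSemidef := by
  induction t with
  | zero => simpa using hX
  | succ k ih => rw [pow_succ']; exact hpos _ ih

theorem summable_psd {n : ℕ} (f : Module.End ℝ (Matrix (Fin n) (Fin n) ℝ))
    (hpos : ∀ X, X.PosSemidef → (f X).PosSemidef)
    (W : Matrix (Fin n) (Fin n) ℝ) (hWp : W.PosSemidef) (hW : W = f W + 1)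
    (C : Matrix (Fin n) (Fin n) ℝ) (hC : C.PosSemidef) :
    Summable (fun t : ℕ => (f ^ t) C) := by
  have hI : ∀ N : ℕ, W = (f ^ N) W + ∑ t ∈ Finset.range N, (f ^ t) 1 := by
    intro N
    induction N with
    | zero => simp
    | succ k ih =>
      rw [Finset.sum_range_succ, pow_succ, Module.End.mul_apply]
      conv_lhs => rw [ih]
      conv_lhs => enter [1]; rw [hW]
      rw [map_add]; abel
  have s1 : Summable (fun t : ℕ => ((f ^ t) 1).trace) := by
    refine summable_of_sum_range_le (c := W.trace)
      (fun t => (psd_pow f hpos _ Matrix.PosSemidef.one t).trace_nonneg) fun N => ?_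
    have h := congrArg Matrix.trace (hI N)
    rw [Matrix.trace_add, Matrix.trace_sum] at h
    have := (psd_pow f hpos W hWp N).trace_nonneg
    linarith
  have hD := psd_of_entries (-C) (by rw [Matrix.transpose_neg, psd_symm hC]) C.trace
    (fun i j => by rw [Matrix.neg_apply, abs_neg]; exact psd_entry_le C hC i j)
  have hb : ∀ t, ((f ^ t) C).trace ≤ (n * C.trace) * ((f ^ t) 1).trace := by
    intro t
    have := (psd_pow f hpos _ hD t).trace_nonneg
    rw [map_add, map_neg, map_smul, Matrix.trace_add, Matrix.trace_neg, Matrix.trace_smul,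
      smul_eq_mul] at this
    linarith
  refine Pi.summable.2 fun i => Pi.summable.2 fun j => ?_
  refine Summable.of_norm_bounded (s1.mul_left (n * C.trace)) fun t => ?_
  exact (psd_entry_le _ (psd_pow f hpos C hC t) i j).trans (hb t)

theorem main_aux {n : ℕ} (f : Module.End ℝ (Matrix (Fin n) (Fin n) ℝ))
    (hpos : ∀ X, X.PosSemidef → (f X).PosSemidef) (htr : ∀ X, f Xᵀ = (f X)ᵀ)
    (hinj : ∀ s ∈ Set.Icc (0 : ℝ) 1, ∀ X, X = s • f X → X = 0)
    (C : Matrix (Fin n) (Fin n) ℝ) (hC : C.PosSemidef) :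
    ∃ P, P = f P + C ∧ (∀ P', P' = f P' + C → P' = P) ∧ P.PosSemidef ∧
      HasSum (fun t : ℕ => (f ^ t) C) P := by
  obtain ⟨W, hWp, hW⟩ := exists_psd_sol f hpos htr hinj
  obtain ⟨P, hP⟩ := summable_psd f hpos W hWp hW C hC
  have hfc : Continuous f := LinearMap.continuous_of_finiteDimensional f
  have h1 : HasSum (fun t : ℕ => (f ^ (t + 1)) C) (f P) := by
    have := hP.map f hfc
    refine this.congr_fun ?_ 
    intro t
    simp [pow_succ']
  have hPe : P = f P + C := by
    have := (hasSum_nat_add_iff' (f := fun t : ℕ => (f ^ t) C) 1).2 hP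
    have := this.unique h1
    simp at this
    rw [← this]; abel
  refine ⟨P, hPe, fun P' h' => ?_, ?_, hP⟩
  · rw [← sub_eq_zero]
    refine hinj 1 (by simp) _ ?_
    rw [one_smul, map_sub]
    refine (congrArg₂ (· - ·) h' hPe).trans ?_
    exact add_sub_add_right_eq_sub _ _ _
  · exact psd_closed.mem_of_tendsto hP (Eventually.of_forall fun s =>
      Matrix.posSemidef_sum s fun t _ => psd_pow f hpos C hC t)

theorem sandwich_apply' {n : ℕ} (M X : Matrix (Fin n) (Fin n) ℝ) :
    sandwich M X = M * X * Mᵀ := by simp [sandwich, Matrix.mul_assoc]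

theorem sandwich_psd {n : ℕ} (M X : Matrix (Fin n) (Fin n) ℝ) (hX : X.PosSemidef) :
    (sandwich M X).PosSemidef := by
  rw [sandwich_apply', ← Matrix.conjTranspose_eq_transpose_of_trivial]
  exact hX.mul_mul_conjTranspose_same M

theorem sandwich_tr {n : ℕ} (M X : Matrix (Fin n) (Fin n) ℝ) :
    sandwich M Xᵀ = (sandwich M X)ᵀ := by
  simp [sandwich_apply', Matrix.mul_assoc]

theorem sandwich_adj {n : ℕ} (M X Y : Matrix (Fin n) (Fin n) ℝ) :
    ((sandwich Mᵀ Y)ᵀ * X).trace = (Yᵀ * sandwich M X).trace := by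
  simp only [sandwich_apply', Matrix.transpose_mul, Matrix.transpose_transpose]
  rw [Matrix.mul_assoc, Matrix.trace_mul_comm]
  simp only [Matrix.mul_assoc]

theorem calT_adj {n m p q : ℕ}
    (A : Matrix (Fin n) (Fin n) ℝ) (A' : Fin p → Matrix (Fin n) (Fin n) ℝ)
    (B : Matrix (Fin n) (Fin m) ℝ) (B' : Fin q → Matrix (Fin n) (Fin m) ℝ)
    (al : Fin p → ℝ) (be : Fin q → ℝ) (L : Matrix (Fin m) (Fin n) ℝ)
    (X Y : Matrix (Fin n) (Fin n) ℝ) :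
    ((calTstar A A' B B' al be L Y)ᵀ * X).trace = (Yᵀ * calT A A' B B' al be L X).trace := by
  unfold calT calTstar
  generalize A + B * L = K
  simp only [LinearMap.add_apply, LinearMap.sum_apply, LinearMap.smul_apply,
    Matrix.transpose_add, Matrix.transpose_sum, Matrix.transpose_smul, Matrix.add_mul,
    Matrix.mul_add, Matrix.sum_mul, Matrix.mul_sum, Matrix.smul_mul, Matrix.mul_smul,
    Matrix.trace_add, Matrix.trace_sum, Matrix.trace_smul, sandwich_adj]

theorem stmt2 {n m p q : ℕ} (hn : 0 < n) (hm : 0 < m)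
    (A : Matrix (Fin n) (Fin n) ℝ) (A' : Fin p → Matrix (Fin n) (Fin n) ℝ)
    (B : Matrix (Fin n) (Fin m) ℝ) (B' : Fin q → Matrix (Fin n) (Fin m) ℝ)
    (al : Fin p → ℝ) (be : Fin q → ℝ) (hal : ∀ i, 0 ≤ al i) (hbe : ∀ j, 0 ≤ be j)
    (Q : Matrix (Fin n) (Fin n) ℝ) (hQ : Q.PosSemidef)
    (R : Matrix (Fin m) (Fin m) ℝ) (hR : R.PosDef)
    (L : Matrix (Fin m) (Fin n) ℝ)
    (hadm : Admissible A A' B B' al be L) :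
    ∃ P : Matrix (Fin n) (Fin n) ℝ,
      P = calTstar A A' B B' al be L P + Q + Lᵀ * R * L ∧
      (∀ P' : Matrix (Fin n) (Fin n) ℝ,
        P' = calTstar A A' B B' al be L P' + Q + Lᵀ * R * L → P' = P) ∧
      P.PosSemidef ∧
      HasSum (fun t : ℕ => ((calTstar A A' B B' al be L) ^ t) (Q + Lᵀ * R * L)) P := by

  simp only [add_assoc]
  refine main_aux _ ?_ ?_ ?_ _ ?_
  · intro X hX
    simp only [calTstar, LinearMap.add_apply, LinearMap.sum_apply, LinearMap.smul_apply]
    exact ((sandwich_psd _ X hX).add (Matrix.posSemidef_sum _ fun i _ =>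
      (sandwich_psd _ X hX).smul (hal i))).add (Matrix.posSemidef_sum _ fun j _ =>
      (sandwich_psd _ X hX).smul (hbe j))
  · intro X
    simp only [calTstar, LinearMap.add_apply, LinearMap.sum_apply, LinearMap.smul_apply,
      sandwich_tr, Matrix.transpose_add, Matrix.transpose_sum, Matrix.transpose_smul]
  · rintro s ⟨hs0, hs1⟩ Y hY
    rcases hs0.eq_or_lt with rfl | hs
    · simpa using hY
    have hlt : spectralRadius ℝ (calT A A' B B' al be L) < (‖s⁻¹‖₊ : ENNReal) := by
      refine lt_of_lt_of_le hadm ?_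
      have h1 : (1:ℝ) ≤ ‖s⁻¹‖ := by
        rw [Real.norm_of_nonneg (by positivity)]
        exact (one_le_inv₀ hs).2 hs1
      exact_mod_cast h1
    have hmem := spectrum.mem_resolventSet_of_spectralRadius_lt hlt
    rw [spectrum.mem_resolventSet_iff, Module.End.isUnit_iff] at hmem
    obtain ⟨X, hX⟩ := hmem.2 Y
    have hT : calTstar A A' B B' al be L Y = s⁻¹ • Y := by
      conv_rhs => rw [hY]
      rw [smul_smul, inv_mul_cancel₀ hs.ne', one_smul]
    have hadj := calT_adj A A' B B' al be L X Y
    rw [hT] at hadj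
    have h0 : (Yᵀ * Y).trace = 0 := by
      conv_lhs => enter [1, 2]; rw [← hX]
      simp only [LinearMap.sub_apply, Module.algebraMap_end_apply, Matrix.mul_sub,
        Matrix.trace_sub, ← hadj, Matrix.transpose_smul, Matrix.smul_mul, Matrix.mul_smul, sub_self]
    rw [← Matrix.conjTranspose_eq_transpose_of_trivial] at h0
    exact Matrix.trace_conjTranspose_mul_self_eq_zero_iff.1 h0
  · refine hQ.add ?_
    have := hR.posSemidef.conjTranspose_mul_mul_same L
    rwa [Matrix.conjTranspose_eq_transpose_of_trivial] at this
end

section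
/- Let the gain L ∈ ℝ^{m×n} be admissible, let P solve the stochastic Lyapunov equation P = 𝒯_L^*(P) + Q + Lᵀ R L, let X solve X = 𝒯_L(X) + D, and let Σ_{k+1} = 𝒯_L(Σ_k) + D with Σ_0 symmetric positive semidefinite. Then for every k the series Σ_{t=k}^∞ ( tr((Q + Lᵀ R L) Σ_t) − tr(P D) ) converges and equals tr(P Σ_k) + s̄, where s̄ = −tr(P X) is a constant independent of k and of Σ_k. In particular, the value function J(x_k) = E Σ_{t=k}^∞ (c(x_t,u_t) − λ) is the quadratic form E(x_kᵀ P x_k) plus a constant. -/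
open Matrix Filter Topology

namespace S6

lemma exists_path {E : Type*} [NormedAddCommGroup E] [NormedSpace ℝ E] [FiniteDimensional ℝ E]
    (T : Module.End ℝ E) (h : spectralRadius ℝ T < 1) (D : E) :
    (∀ t ∈ Set.Icc (0:ℝ) 1, IsUnit (1 - t • T)) ∧
    ∃ f : ℝ → E, ContinuousOn f (Set.Icc 0 1) ∧ ∀ t ∈ Set.Icc (0:ℝ) 1, f t = t • T (f t) + D := by
  have hU : ∀ t ∈ Set.Icc (0:ℝ) 1, IsUnit (1 - t • T) := by
    intro t ht
    rcases eq_or_lt_of_le ht.1 with h0 | h0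
    · simp [← h0]
    · have h1 : (t⁻¹ : ℝ) ∈ resolventSet ℝ T := by
        apply spectrum.mem_resolventSet_of_spectralRadius_lt
        refine lt_of_lt_of_le h ?_
        have : (1:NNReal) ≤ ‖t⁻¹‖₊ := by
          rw [← NNReal.coe_le_coe]
          simp only [NNReal.coe_one, coe_nnnorm, Real.norm_eq_abs]
          rw [abs_of_pos (inv_pos.mpr h0)]
          exact (one_le_inv₀ h0).mpr ht.2
        exact_mod_cast this
      have h2 : IsUnit (algebraMap ℝ (Module.End ℝ E) t⁻¹ - T) := h1
      have h3 : (1 - t • T) = algebraMap ℝ (Module.End ℝ E) t * (algebraMap ℝ (Module.End ℝ E) t⁻¹ - T) := by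
        rw [mul_sub, ← map_mul, mul_inv_cancel₀ h0.ne', map_one, ← Algebra.smul_def]
      rw [h3]
      exact ((IsUnit.mk0 t h0.ne').map _).mul h2
  refine ⟨hU, ?_⟩
  let Φ := (Module.End.toContinuousLinearMap (𝕜 := ℝ) E)
  let T' : E →L[ℝ] E := Φ T
  have hU' : ∀ t ∈ Set.Icc (0:ℝ) 1, IsUnit (1 - t • T') := by
    intro t ht
    have := (hU t ht).map Φ
    simpa [T'] using this
  have : CompleteSpace E := FiniteDimensional.complete ℝ E
  refine ⟨fun t => (Ring.inverse (1 - t • T')) D, ?_, ?_⟩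
  · intro t ht
    apply ContinuousAt.continuousWithinAt
    have h1 : ContinuousAt (fun t : ℝ => Ring.inverse (1 - t • T')) t := by
      obtain ⟨u, hu⟩ := hU' t ht
      have := NormedRing.inverse_continuousAt u
      rw [hu] at this
      refine ContinuousAt.comp (f := fun t : ℝ => 1 - t • T') this ?_
      fun_prop
    exact h1.clm_apply continuousAt_const
  · intro t ht
    have := Ring.mul_inverse_cancel _ (hU' t ht)
    have h2 := congrArg (fun g : E →L[ℝ] E => g D) this
    simp only [mul_apply_eq_comp, _root_.sub_apply, one_apply_eq_self, _root_.smul_apply] at h2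
    have h3 := sub_eq_iff_eq_add.mp h2
    rw [add_comm] at h3
    exact h3

variable {n : ℕ}

lemma isHerm_iff {M : Matrix (Fin n) (Fin n) ℝ} : M.IsHermitian ↔ Mᵀ = M := by
  rw [Matrix.IsHermitian, conjTranspose_eq_transpose_of_trivial]

lemma psd_iff {M : Matrix (Fin n) (Fin n) ℝ} :
    M.PosSemidef ↔ Mᵀ = M ∧ ∀ x : Fin n → ℝ, 0 ≤ x ⬝ᵥ M *ᵥ x := by
  rw [posSemidef_iff_dotProduct_mulVec, isHerm_iff]; simp

lemma pd_lower {M : Matrix (Fin n) (Fin n) ℝ} (hM : M.PosDef) :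
    ∃ δ > 0, ∀ x : Fin n → ℝ, δ * ‖x‖ ^ 2 ≤ x ⬝ᵥ M *ᵥ x := by
  have hc : IsCompact (Metric.sphere (0 : Fin n → ℝ) 1) := isCompact_sphere _ _
  have key : ∃ δ > 0, ∀ x ∈ Metric.sphere (0 : Fin n → ℝ) 1, δ ≤ x ⬝ᵥ M *ᵥ x := by
    rcases (Metric.sphere (0 : Fin n → ℝ) 1).eq_empty_or_nonempty with he | hne
    · exact ⟨1, one_pos, by simp [he]⟩
    · have hcont : Continuous (fun x : Fin n → ℝ => x ⬝ᵥ M *ᵥ x) := by fun_prop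
      obtain ⟨x0, hx0, hmin⟩ := hc.exists_isMinOn hne hcont.continuousOn
      refine ⟨_, ?_, fun x hx => hmin hx⟩
      have : x0 ≠ 0 := by
        rintro rfl; simp at hx0
      simpa using hM.dotProduct_mulVec_pos this
  obtain ⟨δ, hδ, h⟩ := key
  refine ⟨δ, hδ, fun x => ?_⟩
  by_cases hx : x = 0
  · simp [hx]
  have hn : 0 < ‖x‖ := norm_pos_iff.mpr hx
  have := h (‖x‖⁻¹ • x) (by simp [norm_smul, hn.ne'])
  rw [mulVec_smul, smul_dotProduct, dotProduct_smul, smul_eq_mul, smul_eq_mul] at this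
  calc δ * ‖x‖ ^ 2 ≤ (‖x‖⁻¹ * (‖x‖⁻¹ * (x ⬝ᵥ M *ᵥ x))) * ‖x‖ ^ 2 := by gcongr
    _ = _ := by field_simp

lemma qf_le (Y : Matrix (Fin n) (Fin n) ℝ) (x : Fin n → ℝ) :
    x ⬝ᵥ Y *ᵥ x ≤ (∑ i, ∑ j, |Y i j|) * ‖x‖ ^ 2 := by
  simp only [dotProduct, mulVec, Finset.mul_sum, Finset.sum_mul]
  refine Finset.sum_le_sum fun i _ => Finset.sum_le_sum fun j _ => ?_
  refine (le_abs_self _).trans ?_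
  rw [abs_mul, abs_mul]
  have h1 : |x i| ≤ ‖x‖ := norm_le_pi_norm x i
  have h2 : |x j| ≤ ‖x‖ := norm_le_pi_norm x j
  calc |x i| * (|Y i j| * |x j|) ≤ ‖x‖ * (|Y i j| * ‖x‖) := by gcongr
    _ = _ := by ring

lemma pd_open {M : Matrix (Fin n) (Fin n) ℝ} (hM : M.PosDef) :
    ∃ δ > 0, ∀ Y : Matrix (Fin n) (Fin n) ℝ, Yᵀ = Y → (∑ i, ∑ j, |Y i j|) ≤ δ →
      (M - Y).PosSemidef := by
  obtain ⟨δ, hδ, h⟩ := pd_lower hM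
  refine ⟨δ, hδ, fun Y hY hs => ?_⟩
  rw [psd_iff]
  refine ⟨by rw [transpose_sub, hY, isHerm_iff.mp hM.1], fun x => ?_⟩
  rw [sub_mulVec, dotProduct_sub, sub_nonneg]
  exact (qf_le Y x).trans ((mul_le_mul_of_nonneg_right hs (by positivity)).trans (h x))

lemma pd_dom {M : Matrix (Fin n) (Fin n) ℝ} (hM : M.PosDef) (Y : Matrix (Fin n) (Fin n) ℝ)
    (hY : Yᵀ = Y) : ∃ c : ℝ, 1 ≤ c ∧ (c • M - Y).PosSemidef := by
  obtain ⟨δ, hδ, h⟩ := pd_open hM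
  set s := ∑ i, ∑ j, |Y i j| with hs
  have hs0 : 0 ≤ s := by positivity
  refine ⟨1 + s / δ, by linarith [div_nonneg hs0 hδ.le], ?_⟩
  set c := 1 + s / δ with hc
  have hc0 : 0 < c := by positivity
  have := h (c⁻¹ • Y) (by rw [transpose_smul, hY]) (by
    simp only [Matrix.smul_apply, smul_eq_mul, abs_mul, ← Finset.mul_sum, ← hs, abs_inv, abs_of_pos hc0]
    rw [inv_mul_le_iff₀ hc0, hc]
    field_simp
    linarith)
  have h2 := this.smul hc0.le
  rwa [smul_sub, smul_smul, mul_inv_cancel₀ hc0.ne', one_smul] at h2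

lemma entry_bound {X Z : Matrix (Fin n) (Fin n) ℝ} {s : ℝ} (hZ : Zᵀ = Z)
    (h1 : (s • X - Z).PosSemidef) (h2 : (s • X + Z).PosSemidef) (i j : Fin n) :
    |Z i j| ≤ s * (((Pi.single i 1 + Pi.single j 1 : Fin n → ℝ) ⬝ᵥ X *ᵥ (Pi.single i 1 + Pi.single j 1)
      + X i i + X j j) / 2) := by
  have a1 := (psd_iff.mp h1).2
  have a2 := (psd_iff.mp h2).2
  have b1 := a1 (Pi.single i 1 + Pi.single j 1)
  have b2 := a2 (Pi.single i 1 + Pi.single j 1)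
  have c1 := a1 (Pi.single i 1)
  have c2 := a2 (Pi.single i 1)
  have d1 := a1 (Pi.single j 1)
  have d2 := a2 (Pi.single j 1)
  have hs : Z j i = Z i j := congrFun (congrFun hZ i) j
  simp [mulVec_add, sub_mulVec, add_mulVec, smul_mulVec] at b1 b2 c1 c2 d1 d2 ⊢
  rw [abs_le]
  constructor <;> linarith

/-- abstract version -/
lemma main (T : Module.End ℝ (Matrix (Fin n) (Fin n) ℝ)) (h : spectralRadius ℝ T < 1)
    (hpos : ∀ Y, Y.PosSemidef → (T Y).PosSemidef) (htr : ∀ Y, (T Y)ᵀ = T Yᵀ)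
    (D X : Matrix (Fin n) (Fin n) ℝ) (hD : D.PosDef) (hX : X = T X + D) :
    Xᵀ = X ∧ ∀ Y : Matrix (Fin n) (Fin n) ℝ, Yᵀ = Y → ∀ i j, Summable (fun t : ℕ => (T ^ t) Y i j) := by
  let _ : NormedAddCommGroup (Matrix (Fin n) (Fin n) ℝ) := Matrix.normedAddCommGroup
  let _ : NormedSpace ℝ (Matrix (Fin n) (Fin n) ℝ) := Matrix.normedSpace
  obtain ⟨hU, f, hf, hfe⟩ := exists_path T h D
  have huniq : ∀ t ∈ Set.Icc (0:ℝ) 1, ∀ Y Z : Matrix (Fin n) (Fin n) ℝ,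
      Y = t • T Y + D → Z = t • T Z + D → Y = Z := by
    intro t ht Y Z hY hZ
    have hinj := ((Module.End.isUnit_iff _).mp (hU t ht)).injective
    apply hinj
    simp only [LinearMap.sub_apply, Module.End.one_apply, LinearMap.smul_apply]
    rw [sub_eq_of_eq_add' hY, sub_eq_of_eq_add' hZ]
  have hDt : Dᵀ = D := isHerm_iff.mp hD.1
  have hsym : ∀ t ∈ Set.Icc (0:ℝ) 1, (f t)ᵀ = f t := by
    intro t ht
    refine huniq t ht _ _ ?_ (hfe t ht)
    conv_lhs => rw [hfe t ht]
    rw [transpose_add, transpose_smul, htr, hDt]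
  have hfX : f 1 = X := huniq 1 (by simp) _ _ (hfe 1 (by simp)) (by rw [one_smul]; exact hX)
  have hPD : ∀ t ∈ Set.Icc (0:ℝ) 1, (f t).PosSemidef → (f t).PosDef := by
    intro t ht hp
    rw [hfe t ht]
    exact hD.posSemidef_add ((hpos _ hp).smul ht.1)
  have hall : Set.Icc (0:ℝ) 1 ⊆ {t | (f t).PosSemidef} := by
    apply IsClosed.Icc_subset_of_forall_exists_gt
    · have : {t | (f t).PosSemidef} ∩ Set.Icc (0:ℝ) 1 =
          Set.Icc (0:ℝ) 1 ∩ f ⁻¹' {M | ∀ x : Fin n → ℝ, 0 ≤ x ⬝ᵥ M *ᵥ x} := by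
        ext t
        constructor
        · rintro ⟨h1, h2⟩
          exact ⟨h2, (psd_iff.mp h1).2⟩
        · rintro ⟨h1, h2⟩
          exact ⟨psd_iff.mpr ⟨hsym t h1, h2⟩, h1⟩
      rw [this]
      apply hf.preimage_isClosed_of_isClosed isClosed_Icc
      rw [Set.ofPred_forall]
      refine isClosed_iInter fun x => isClosed_le continuous_const ?_
      exact Continuous.dotProduct continuous_const (Continuous.matrix_mulVec continuous_id continuous_const)
    · show (f 0).PosSemidef
      rw [hfe 0 (by simp)]
      simpa using hD.posSemidef
    · rintro t ⟨ht, ht1⟩ y hy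
      have htI : t ∈ Set.Icc (0:ℝ) 1 := ⟨ht1.1, ht1.2.le⟩
      obtain ⟨δ, hδ, hop⟩ := pd_open (hPD t htI ht)
      have hcont : ContinuousWithinAt f (Set.Icc 0 1) t := hf t htI
      have hg : ContinuousWithinAt (fun u => ∑ i, ∑ j, |(f t - f u) i j|) (Set.Icc 0 1) t := by
        refine ContinuousWithinAt.comp (t := Set.univ) (g := fun M : Matrix (Fin n) (Fin n) ℝ => ∑ i, ∑ j, |(f t - M) i j|) ?_ hcont (Set.mapsTo_univ _ _)
        apply Continuous.continuousWithinAt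
        refine continuous_finsetSum _ fun i _ => continuous_finsetSum _ fun j _ => ?_
        apply Continuous.abs
        exact (continuous_const.sub continuous_id).matrix_elem i j
      have hev : ∀ᶠ u in 𝓝[Set.Icc 0 1] t, ∑ i, ∑ j, |(f t - f u) i j| < δ := by
        apply hg.eventually_lt_const
        simpa using hδ
      have hev2 : ∀ᶠ u in 𝓝[>] t, u ∈ Set.Ioc t (min y 1) :=
        Ioc_mem_nhdsGT (lt_min hy ht1.2)
      have hle : 𝓝[Set.Ioc t (min y 1)] t ≤ 𝓝[Set.Icc 0 1] t :=
        nhdsWithin_mono _ fun u hu => ⟨ht1.1.trans hu.1.le, hu.2.trans (min_le_right _ _)⟩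
      rw [nhdsWithin_Ioc_eq_nhdsGT (lt_min hy ht1.2)] at hle
      obtain ⟨u, hu1, hu2⟩ := ((hev.filter_mono hle).and hev2).exists
      have huI : u ∈ Set.Icc (0:ℝ) 1 := ⟨ht1.1.trans hu2.1.le, hu2.2.trans (min_le_right _ _)⟩
      refine ⟨u, ?_, hu2.1, hu2.2.trans (min_le_left _ _)⟩
      have := hop (f t - f u) (by rw [transpose_sub, hsym t htI, hsym u huI]) hu1.le
      rwa [sub_sub_cancel] at this
  have hXs : Xᵀ = X := hfX ▸ hsym 1 (by simp)
  have hXp : X.PosDef := hfX ▸ hPD 1 (by simp) (hall (by simp))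
  refine ⟨hXs, fun Y hY => ?_⟩
  obtain ⟨c, hc1, hc⟩ := pd_dom hD X hXs
  have hc0 : 0 < c := by linarith
  set r := 1 - c⁻¹ with hr
  have hr0 : 0 ≤ r := by rw [hr, sub_nonneg]; exact inv_le_one_of_one_le₀ hc1
  have hr1 : r < 1 := by rw [hr]; linarith [inv_pos.mpr hc0]
  have hTX : (r • X - T X).PosSemidef := by
    have h1 := hc.smul (inv_pos.mpr hc0).le
    have h2 : T X = X - D := eq_sub_of_add_eq hX.symm
    have h3 : r • X - T X = c⁻¹ • (c • D - X) := by
      rw [h2, smul_sub, smul_smul, inv_mul_cancel₀ hc0.ne', hr, sub_smul, one_smul, one_smul]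
      abel
    rwa [h3]
  have step : ∀ Z : Matrix (Fin n) (Fin n) ℝ, ∀ s : ℝ, 0 ≤ s → (s • X - Z).PosSemidef →
      ((s * r) • X - T Z).PosSemidef := by
    intro Z s hs hZ
    have h1 := (hpos _ hZ).add (hTX.smul hs)
    have h2 : (s * r) • X - T Z = T (s • X - Z) + s • (r • X - T X) := by
      rw [map_sub, map_smul, smul_sub, smul_smul]; abel
    rwa [h2]
  have iter : ∀ Z : Matrix (Fin n) (Fin n) ℝ, ∀ s : ℝ, 0 ≤ s → (s • X - Z).PosSemidef →
      ∀ t : ℕ, ((s * r ^ t) • X - (T ^ t) Z).PosSemidef := by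
    intro Z s hs hZ t
    induction t with
    | zero => simpa using hZ
    | succ t ih =>
      have := step _ _ (by positivity) ih
      rwa [mul_assoc, ← pow_succ, ← Module.End.mul_apply, ← pow_succ'] at this
  have hsymT : ∀ t : ℕ, ((T ^ t) Y)ᵀ = (T ^ t) Y := by
    intro t
    induction t with
    | zero => simpa using hY
    | succ t ih => rw [pow_succ', Module.End.mul_apply, htr, ih]
  obtain ⟨a, ha1, ha⟩ := pd_dom hXp Y hY
  obtain ⟨b, hb1, hb⟩ := pd_dom hXp (-Y) (by rw [transpose_neg, hY])
  set s := a + b with hs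
  have ha' : (s • X - Y).PosSemidef := by
    have := ha.add (hXp.posSemidef.smul (show 0 ≤ b by linarith))
    rwa [show s • X - Y = a • X - Y + b • X by rw [hs, add_smul]; abel]
  have hb' : (s • X - (-Y)).PosSemidef := by
    have := hb.add (hXp.posSemidef.smul (show 0 ≤ a by linarith))
    rwa [show s • X - (-Y) = b • X - (-Y) + a • X by rw [hs, add_smul]; abel]
  have hs0 : 0 ≤ s := by linarith
  intro i j
  refine Summable.of_norm_bounded (g := fun t : ℕ => (s * r ^ t) * _) ?_ fun t =>
    entry_bound (X := X) (hsymT t) (iter Y s hs0 ha' t) (by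
      have := iter (-Y) s hs0 hb' t
      rwa [map_neg, sub_neg_eq_add] at this) i j
  exact ((summable_geometric_of_lt_one hr0 hr1).mul_left s).mul_right _

lemma sandwich_apply (M X : Matrix (Fin n) (Fin n) ℝ) : sandwich M X = M * X * Mᵀ := by
  simp [sandwich, mul_assoc]

lemma trace_sandwich (M P X : Matrix (Fin n) (Fin n) ℝ) :
    (sandwich Mᵀ P * X).trace = (P * sandwich M X).trace := by
  rw [sandwich_apply, sandwich_apply, transpose_transpose]
  rw [mul_assoc, mul_assoc, trace_mul_comm]
  simp only [mul_assoc]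

end S6

theorem stmt6 {n m p q : ℕ} (hn : 0 < n) (hm : 0 < m)
    (A : Matrix (Fin n) (Fin n) ℝ) (A' : Fin p → Matrix (Fin n) (Fin n) ℝ)
    (B : Matrix (Fin n) (Fin m) ℝ) (B' : Fin q → Matrix (Fin n) (Fin m) ℝ)
    (al : Fin p → ℝ) (be : Fin q → ℝ) (hal : ∀ i, 0 ≤ al i) (hbe : ∀ j, 0 ≤ be j)
    (Q : Matrix (Fin n) (Fin n) ℝ) (hQ : Q.PosSemidef)
    (R : Matrix (Fin m) (Fin m) ℝ) (hR : R.PosDef)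
    (D : Matrix (Fin n) (Fin n) ℝ) (hD : D.PosDef)
    (L : Matrix (Fin m) (Fin n) ℝ)
    (hadm : Admissible A A' B B' al be L)
    (P : Matrix (Fin n) (Fin n) ℝ)
    (hP : P = calTstar A A' B B' al be L P + Q + Lᵀ * R * L)
    (X : Matrix (Fin n) (Fin n) ℝ)
    (hX : X = calT A A' B B' al be L X + D)
    (S : ℕ → Matrix (Fin n) (Fin n) ℝ) (hS0 : (S 0).PosSemidef)
    (hrec : ∀ k, S (k + 1) = calT A A' B B' al be L (S k) + D) :
    ∀ k, HasSum
        (fun t : ℕ => ((Q + Lᵀ * R * L) * S (k + t)).trace - (P * D).trace)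
        ((P * S k).trace + (-(P * X).trace)) := by
  have hsa : ∀ M Y : Matrix (Fin n) (Fin n) ℝ, Y.PosSemidef → (sandwich M Y).PosSemidef := by
    intro M Y hY
    rw [S6.sandwich_apply]
    simpa [conjTranspose_eq_transpose_of_trivial] using hY.mul_mul_conjTranspose_same M
  have hst : ∀ M Y : Matrix (Fin n) (Fin n) ℝ, (sandwich M Y)ᵀ = sandwich M Yᵀ := by
    intro M Y
    simp [S6.sandwich_apply, transpose_mul, mul_assoc]
  have hpos : ∀ Y, Y.PosSemidef → (calT A A' B B' al be L Y).PosSemidef := by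
    intro Y hY
    simp only [calT, LinearMap.add_apply, LinearMap.sum_apply, LinearMap.smul_apply]
    exact ((hsa _ _ hY).add (posSemidef_sum _ fun i _ => (hsa _ _ hY).smul (hal i))).add
      (posSemidef_sum _ fun j _ => (hsa _ _ hY).smul (hbe j))
  have htr : ∀ Y, (calT A A' B B' al be L Y)ᵀ = calT A A' B B' al be L Yᵀ := by
    intro Y
    simp only [calT, LinearMap.add_apply, LinearMap.sum_apply, LinearMap.smul_apply,
      transpose_add, transpose_sum, transpose_smul, hst]
  have hadj : ∀ Y, (calTstar A A' B B' al be L P * Y).trace =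
      (P * calT A A' B B' al be L Y).trace := by
    intro Y
    simp only [calT, calTstar, LinearMap.add_apply, LinearMap.sum_apply, LinearMap.smul_apply,
      add_mul, mul_add, Finset.sum_mul, Finset.mul_sum, trace_add, trace_sum, smul_mul_assoc,
      mul_smul_comm, trace_smul, S6.trace_sandwich]
  obtain ⟨hXs, hsum⟩ := S6.main _ hadm hpos htr D X hD hX
  generalize calT A A' B B' al be L = T at *
  have hDt : Dᵀ = D := S6.isHerm_iff.mp hD.1
  have hSs : ∀ k, (S k)ᵀ = S k := by
    intro k
    induction k with
    | zero => exact S6.isHerm_iff.mp hS0.1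
    | succ k ih => rw [hrec, transpose_add, htr, ih, hDt]
  intro k
  have hSk : ∀ t, S (k + t) = X + (T ^ t) (S k - X) := by
    intro t
    induction t with
    | zero => simp
    | succ t ih =>
      rw [← add_assoc, hrec, ih, map_add, pow_succ', Module.End.mul_apply]
      nth_rewrite 3 [hX]
      abel
  have hs : Summable (fun t : ℕ => (P * (T ^ t) (S k - X)).trace) := by
    simp only [trace, diag_apply, mul_apply]
    refine summable_sum fun i _ => summable_sum fun j _ => Summable.mul_left _ ?_
    exact hsum _ (by rw [transpose_sub, hSs, hXs]) j i
  have hterm : ∀ t : ℕ, ((Q + Lᵀ * R * L) * S (k + t)).trace - (P * D).trace =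
      (P * (T ^ t) (S k - X)).trace - (P * (T ^ (t + 1)) (S k - X)).trace := by
    intro t
    have h1 : Q + Lᵀ * R * L = P - calTstar A A' B B' al be L P := by
      nth_rewrite 1 [hP]
      abel
    have h2 := hSk (t + 1)
    rw [← add_assoc, hrec] at h2
    have h3 : (P * T (S (k + t))).trace + (P * D).trace =
        (P * X).trace + (P * (T ^ (t + 1)) (S k - X)).trace := by
      rw [← trace_add, ← mul_add, h2, mul_add, trace_add]
    rw [h1, sub_mul, trace_sub, hadj]
    have h4 : (P * S (k + t)).trace = (P * X).trace + (P * (T ^ t) (S k - X)).trace := by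
      rw [hSk t, mul_add, trace_add]
    linarith
  simp only [hterm]
  have h0 := hs.hasSum
  have h1 := ((summable_nat_add_iff 1).mpr hs).hasSum
  have h2 := h0.sub h1
  have h3 := hs.tsum_eq_zero_add
  have h4 : (P * S k).trace + (-(P * X).trace) =
      ∑' b : ℕ, (P * (T ^ b) (S k - X)).trace - ∑' b : ℕ, (P * (T ^ (b + 1)) (S k - X)).trace := by
    rw [h3, pow_zero, Module.End.one_apply, mul_sub, trace_sub]
    ring
  rw [h4]
  exact h2
end

section
/- Let P be a symmetric positive semidefinite n×n real matrix and define the improved gain L' = −(R + Bᵀ P B + Σ_{j=1}^q β̄_j B_jᵀ P B_j)^{-1} Bᵀ P A. Then for every gain L ∈ ℝ^{m×n}, in the Loewner order, 𝒯_{L'}^*(P) + Q + L'ᵀ R L' ≤ 𝒯_L^*(P) + Q + Lᵀ R L; i.e., L' minimizes the one-step Lyapunov map over all gains. -/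
open Matrix Filter Topology

/-- Completing the square: expansion of the one-step Lyapunov map in the gain. -/
theorem calTstar_expand {n m p q : ℕ}
    (A : Matrix (Fin n) (Fin n) ℝ) (A' : Fin p → Matrix (Fin n) (Fin n) ℝ)
    (B : Matrix (Fin n) (Fin m) ℝ) (B' : Fin q → Matrix (Fin n) (Fin m) ℝ)
    (al : Fin p → ℝ) (be : Fin q → ℝ)
    (Q : Matrix (Fin n) (Fin n) ℝ) (R : Matrix (Fin m) (Fin m) ℝ)
    (P : Matrix (Fin n) (Fin n) ℝ) (K : Matrix (Fin m) (Fin n) ℝ) :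
    calTstar A A' B B' al be K P + Q + Kᵀ * R * K =
      (Aᵀ * P * A + ∑ i, al i • ((A' i)ᵀ * P * A' i) + Q) +
      (Kᵀ * (R + Bᵀ * P * B + ∑ j, be j • ((B' j)ᵀ * P * B' j)) * K +
        Kᵀ * (Bᵀ * P * A) + Aᵀ * P * B * K) := by
  simp only [calTstar, sandwich, LinearMap.add_apply, LinearMap.sum_apply, LinearMap.smul_apply,
    LinearMap.comp_apply, LinearMap.mulLeft_apply, LinearMap.mulRight_apply, transpose_transpose,
    transpose_add, transpose_mul, Matrix.mul_add, Matrix.add_mul, Matrix.mul_sum, Matrix.sum_mul,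
    Matrix.mul_smul, Matrix.smul_mul, Matrix.mul_assoc]
  abel

theorem stmt8 {n m p q : ℕ} (hn : 0 < n) (hm : 0 < m)
    (A : Matrix (Fin n) (Fin n) ℝ) (A' : Fin p → Matrix (Fin n) (Fin n) ℝ)
    (B : Matrix (Fin n) (Fin m) ℝ) (B' : Fin q → Matrix (Fin n) (Fin m) ℝ)
    (al : Fin p → ℝ) (be : Fin q → ℝ) (hal : ∀ i, 0 ≤ al i) (hbe : ∀ j, 0 ≤ be j)
    (Q : Matrix (Fin n) (Fin n) ℝ) (hQ : Q.PosSemidef)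
    (R : Matrix (Fin m) (Fin m) ℝ) (hR : R.PosDef)
    (P : Matrix (Fin n) (Fin n) ℝ) (hP : P.PosSemidef)
    (L' : Matrix (Fin m) (Fin n) ℝ)
    (hL' : L' = -(R + Bᵀ * P * B + ∑ j, be j • ((B' j)ᵀ * P * B' j))⁻¹ * (Bᵀ * P * A)) :
    ∀ L : Matrix (Fin m) (Fin n) ℝ,
      ((calTstar A A' B B' al be L P + Q + Lᵀ * R * L) -
        (calTstar A A' B B' al be L' P + Q + L'ᵀ * R * L')).PosSemidef := by
  intro L
  rw [calTstar_expand, calTstar_expand]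
  set S := R + Bᵀ * P * B + ∑ j, be j • ((B' j)ᵀ * P * B' j) with hS
  have hPD : S.PosDef := by
    have h1 : (Bᵀ * P * B).PosSemidef := by
      simpa using hP.conjTranspose_mul_mul_same B
    have h2 : (∑ j, be j • ((B' j)ᵀ * P * B' j)).PosSemidef := by
      refine Matrix.posSemidef_sum _ fun j _ => ?_
      refine Matrix.PosSemidef.smul ?_ (hbe j)
      simpa using hP.conjTranspose_mul_mul_same (B' j)
    exact (hR.add_posSemidef h1).add_posSemidef h2
  have hPt : Pᵀ = P := by simpa using hP.1.eq
  have hSt : Sᵀ = S := by simpa using hPD.1.eq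
  have hG : Bᵀ * P * A = -(S * L') := by
    rw [hL', Matrix.neg_mul, Matrix.mul_neg, neg_neg,
      Matrix.mul_nonsing_inv_cancel_left _ _ ((Matrix.isUnit_iff_isUnit_det _).1 hPD.isUnit)]
  have hGt : Aᵀ * P * B = -(L'ᵀ * S) := by
    have := congrArg Matrix.transpose hG
    simpa [hPt, hSt, Matrix.mul_assoc] using this
  clear_value S
  rw [hG, hGt]
  have key := hPD.posSemidef.conjTranspose_mul_mul_same (L - L')
  rw [conjTranspose_eq_transpose_of_trivial] at key
  convert key using 1
  simp only [transpose_sub, Matrix.mul_sub, Matrix.sub_mul, Matrix.mul_neg, Matrix.neg_mul,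
    Matrix.mul_assoc]
  abel
end

section
/- Let P* be a symmetric positive semidefinite n×n matrix solving the stochastic algebraic Riccati equation, and let L* = −(R + Bᵀ P* B + Σ_{j=1}^q β̄_j B_jᵀ P* B_j)^{-1} Bᵀ P* A be its associated gain. Then P* satisfies the stochastic Lyapunov equation for L*: P* = 𝒯_{L*}^*(P*) + Q + (L*)ᵀ R L*. -/
open Matrix Filter Topology

theorem stmt9 {n m p q : ℕ} (hn : 0 < n) (hm : 0 < m)
    (A : Matrix (Fin n) (Fin n) ℝ) (A' : Fin p → Matrix (Fin n) (Fin n) ℝ)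
    (B : Matrix (Fin n) (Fin m) ℝ) (B' : Fin q → Matrix (Fin n) (Fin m) ℝ)
    (al : Fin p → ℝ) (be : Fin q → ℝ) (hal : ∀ i, 0 ≤ al i) (hbe : ∀ j, 0 ≤ be j)
    (Q : Matrix (Fin n) (Fin n) ℝ) (hQ : Q.PosSemidef)
    (R : Matrix (Fin m) (Fin m) ℝ) (hR : R.PosDef)
    (Pstar : Matrix (Fin n) (Fin n) ℝ) (hPstar : Pstar.PosSemidef)
    (hSARE : Pstar = Q + Aᵀ * Pstar * A + (∑ i, al i • ((A' i)ᵀ * Pstar * A' i)) -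
      Aᵀ * Pstar * B *
        (R + Bᵀ * Pstar * B + ∑ j, be j • ((B' j)ᵀ * Pstar * B' j))⁻¹ *
        (Bᵀ * Pstar * A))
    (Lstar : Matrix (Fin m) (Fin n) ℝ)
    (hLstar : Lstar =
      -(R + Bᵀ * Pstar * B + ∑ j, be j • ((B' j)ᵀ * Pstar * B' j))⁻¹ * (Bᵀ * Pstar * A)) :
    Pstar = calTstar A A' B B' al be Lstar Pstar + Q + Lstarᵀ * R * Lstar := by
  have hBs : (∑ j, be j • ((B' j)ᵀ * Pstar * B' j)).PosSemidef := by
    refine Matrix.posSemidef_sum _ fun j _ => ?_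
    have h := hPstar.conjTranspose_mul_mul_same (B' j)
    rw [Matrix.conjTranspose_eq_transpose_of_trivial] at h
    exact h.smul (hbe j)
  have hB0 : (Bᵀ * Pstar * B).PosSemidef := by
    have h := hPstar.conjTranspose_mul_mul_same B
    rwa [Matrix.conjTranspose_eq_transpose_of_trivial] at h
  have hM : (R + Bᵀ * Pstar * B + ∑ j, be j • ((B' j)ᵀ * Pstar * B' j)).PosDef :=
    (hR.add_posSemidef hB0).add_posSemidef hBs
  generalize hMdef : R + Bᵀ * Pstar * B + ∑ j, be j • ((B' j)ᵀ * Pstar * B' j) = M at *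
  have hdet : IsUnit M.det := (Matrix.isUnit_iff_isUnit_det M).mp hM.isUnit
  have hML : M * Lstar = -(Bᵀ * Pstar * A) := by
    rw [hLstar, Matrix.neg_mul, Matrix.mul_neg, ← Matrix.mul_assoc,
      Matrix.mul_nonsing_inv _ hdet, Matrix.one_mul]
  have hcross : Aᵀ * Pstar * B * M⁻¹ * (Bᵀ * Pstar * A) = -(Aᵀ * Pstar * B * Lstar) := by
    rw [hLstar, Matrix.neg_mul, Matrix.mul_neg, neg_neg, Matrix.mul_assoc _ M⁻¹]
  have hquad : Lstarᵀ * R * Lstar + Lstarᵀ * (Bᵀ * Pstar * B) * Lstar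
      + Lstarᵀ * (∑ j, be j • ((B' j)ᵀ * Pstar * B' j)) * Lstar
      = -(Lstarᵀ * (Bᵀ * Pstar * A)) := by
    rw [← Matrix.mul_neg, ← hML, ← hMdef]
    simp only [Matrix.add_mul, Matrix.mul_add, Matrix.mul_assoc]
  have hT : calTstar A A' B B' al be Lstar Pstar
      = Aᵀ * Pstar * A + Aᵀ * Pstar * B * Lstar + Lstarᵀ * (Bᵀ * Pstar * A)
        + Lstarᵀ * (Bᵀ * Pstar * B) * Lstar
        + (∑ i, al i • ((A' i)ᵀ * Pstar * A' i))
        + Lstarᵀ * (∑ j, be j • ((B' j)ᵀ * Pstar * B' j)) * Lstar := by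
    simp only [calTstar, sandwich, LinearMap.add_apply, LinearMap.sum_apply,
      LinearMap.smul_apply, LinearMap.comp_apply, LinearMap.mulLeft_apply,
      LinearMap.mulRight_apply, Matrix.transpose_transpose, Matrix.transpose_add,
      Matrix.transpose_mul, Matrix.add_mul, Matrix.mul_add, Matrix.mul_sum, Matrix.sum_mul,
      Matrix.mul_smul, Matrix.smul_mul, Matrix.mul_assoc]
    abel
  rw [hcross] at hSARE
  rw [hT]
  refine hSARE.trans ?_
  rw [← sub_eq_zero]
  rw [← sub_eq_zero] at hquad
  rw [← neg_eq_zero, ← hquad]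
  abel
end

section
/- Let P* be a symmetric positive semidefinite n×n matrix solving the stochastic algebraic Riccati equation. Then for every admissible gain L ∈ ℝ^{m×n}, the solution P of the stochastic Lyapunov equation P = 𝒯_L^*(P) + Q + Lᵀ R L satisfies P* ≤ P in the Loewner order; consequently the average expected cost tr(P D) of any admissible gain satisfies tr(P* D) ≤ tr(P D), so tr(P* D) is the minimal average expected cost. -/
open Matrix Filter Topology

/-- The quadratic form of `X` is nonnegative (no symmetry required). -/
def Qnn {k : ℕ} (X : Matrix (Fin k) (Fin k) ℝ) : Prop := ∀ x : Fin k → ℝ, 0 ≤ x ⬝ᵥ (X *ᵥ x)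

theorem qform_congr {k l : ℕ} (X : Matrix (Fin k) (Fin k) ℝ) (M : Matrix (Fin k) (Fin l) ℝ)
    (x : Fin l → ℝ) : x ⬝ᵥ ((Mᵀ * X * M) *ᵥ x) = (M *ᵥ x) ⬝ᵥ (X *ᵥ (M *ᵥ x)) := by
  rw [← Matrix.mulVec_mulVec, ← Matrix.mulVec_mulVec, Matrix.dotProduct_mulVec,
    Matrix.vecMul_transpose]

theorem Qnn.congr {k l : ℕ} {X : Matrix (Fin k) (Fin k) ℝ} (h : Qnn X)
    (M : Matrix (Fin k) (Fin l) ℝ) : Qnn (Mᵀ * X * M) := by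
  intro x
  rw [qform_congr]
  exact h _

theorem Qnn.add {k : ℕ} {X Y : Matrix (Fin k) (Fin k) ℝ} (h : Qnn X) (h' : Qnn Y) :
    Qnn (X + Y) := by
  intro x
  rw [Matrix.add_mulVec, dotProduct_add]
  exact add_nonneg (h x) (h' x)

theorem Qnn.smul {k : ℕ} {X : Matrix (Fin k) (Fin k) ℝ} (h : Qnn X) {c : ℝ} (hc : 0 ≤ c) :
    Qnn (c • X) := by
  intro x
  rw [Matrix.smul_mulVec, dotProduct_smul]
  exact mul_nonneg hc (h x)

theorem Qnn.sum {k l : ℕ} {X : Fin l → Matrix (Fin k) (Fin k) ℝ} (h : ∀ i, Qnn (X i)) :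
    Qnn (∑ i, X i) := by
  intro x
  rw [Matrix.sum_mulVec, dotProduct_sum]
  exact Finset.sum_nonneg fun i _ => h i x

theorem qform_lower {k : ℕ} (Z : Matrix (Fin k) (Fin k) ℝ) (x : Fin k → ℝ) :
    -(∑ i, ∑ j, |Z i j|) * (x ⬝ᵥ x) ≤ x ⬝ᵥ (Z *ᵥ x) := by
  have key : ∀ i j, -(|Z i j| * (x ⬝ᵥ x)) ≤ x i * (Z i j * x j) := by
    intro i j
    have hi : x i * x i ≤ x ⬝ᵥ x :=
      Finset.single_le_sum (f := fun i => x i * x i) (fun a _ => mul_self_nonneg _)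
        (Finset.mem_univ i)
    have hj : x j * x j ≤ x ⬝ᵥ x :=
      Finset.single_le_sum (f := fun i => x i * x i) (fun a _ => mul_self_nonneg _)
        (Finset.mem_univ j)
    have h1 : |x i * x j| ≤ x ⬝ᵥ x := by
      rw [abs_le]
      constructor <;> nlinarith [sq_nonneg (x i + x j), sq_nonneg (x i - x j)]
    have h2 : |x i * (Z i j * x j)| ≤ |Z i j| * (x ⬝ᵥ x) := by
      rw [show x i * (Z i j * x j) = Z i j * (x i * x j) by ring, abs_mul]
      exact mul_le_mul_of_nonneg_left h1 (abs_nonneg _)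
    exact (abs_le.1 h2).1
  have : x ⬝ᵥ (Z *ᵥ x) = ∑ i, ∑ j, x i * (Z i j * x j) := by
    simp [dotProduct, Matrix.mulVec, Finset.mul_sum]
  rw [this, neg_mul, Finset.sum_mul, ← Finset.sum_neg_distrib]
  refine Finset.sum_le_sum fun i _ => ?_
  rw [Finset.sum_mul, ← Finset.sum_neg_distrib]
  exact Finset.sum_le_sum fun j _ => key i j

/-- Continuous family of solutions. -/
theorem exists_family {n : ℕ} (T : Module.End ℝ (Matrix (Fin n) (Fin n) ℝ))
    (hinj : ∀ t : ℝ, 0 ≤ t → t ≤ 1 → ∀ Y, Y = t • T Y → Y = 0)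
    (c : ℝ → ℝ) (hc : Continuous c) (hc0 : ∀ t, 0 ≤ c t) (hc1 : ∀ t, c t ≤ 1)
    (V : Matrix (Fin n) (Fin n) ℝ) :
    ∃ X : ℝ → Matrix (Fin n) (Fin n) ℝ, Continuous X ∧ ∀ t, X t = c t • T (X t) + V := by
  classical
  let b := Matrix.stdBasis ℝ (Fin n) (Fin n)
  let N : Matrix (Fin n × Fin n) (Fin n × Fin n) ℝ := LinearMap.toMatrix b b T
  let M : ℝ → Matrix (Fin n × Fin n) (Fin n × Fin n) ℝ := fun t => 1 - c t • N
  have hM : Continuous M := by fun_prop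
  have hMdet : ∀ t, (M t).det ≠ 0 := by
    intro t h0
    obtain ⟨v, hv, hv0⟩ := Matrix.exists_mulVec_eq_zero_iff.2 h0
    apply hv
    have h2 : b.equivFun.symm v = c t • T (b.equivFun.symm v) := by
      apply b.equivFun.injective
      rw [map_smul, LinearEquiv.apply_symm_apply]
      have h3 : b.equivFun (T (b.equivFun.symm v)) = N *ᵥ v := by
        have := LinearMap.toMatrix_mulVec_repr b b T (b.equivFun.symm v)
        rw [Module.Basis.equivFun_apply, ← this, ← Module.Basis.equivFun_apply, LinearEquiv.apply_symm_apply]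
      rw [h3]
      have : M t *ᵥ v = v - c t • (N *ᵥ v) := by
        simp only [M, Matrix.sub_mulVec, Matrix.one_mulVec, Matrix.smul_mulVec]
      rw [this] at hv0
      exact sub_eq_zero.1 hv0
    have h4 := hinj _ (hc0 t) (hc1 t) _ h2
    exact (LinearEquiv.map_eq_zero_iff _).1 h4
  have hMinv : Continuous fun t => (M t)⁻¹ := by
    have : (fun t => (M t)⁻¹) = fun t => ((M t).det)⁻¹ • (M t).adjugate := by
      funext t
      rw [Matrix.inv_def, Ring.inverse_eq_inv']
    rw [this]
    exact (hM.matrix_det.inv₀ hMdet).smul hM.matrix_adjugate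
  refine ⟨fun t => b.equivFun.symm ((M t)⁻¹ *ᵥ b.equivFun V), ?_, ?_⟩
  · have h1 : Continuous fun t => (M t)⁻¹ *ᵥ b.equivFun V := hMinv.matrix_mulVec continuous_const
    have h2 : Continuous (b.equivFun.symm : (Fin n × Fin n → ℝ) →ₗ[ℝ] Matrix (Fin n) (Fin n) ℝ) :=
      LinearMap.continuous_of_finiteDimensional _
    exact h2.comp h1
  · intro t
    apply b.equivFun.injective
    simp only [map_add, map_smul, LinearEquiv.apply_symm_apply]
    set v := (M t)⁻¹ *ᵥ b.equivFun V with hv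
    have h3 : b.equivFun (T (b.equivFun.symm v)) = N *ᵥ v := by
      have := LinearMap.toMatrix_mulVec_repr b b T (b.equivFun.symm v)
      rw [Module.Basis.equivFun_apply, ← this, ← Module.Basis.equivFun_apply, LinearEquiv.apply_symm_apply]
    rw [h3]
    have h5 : M t *ᵥ v = b.equivFun V := by
      rw [hv, Matrix.mulVec_mulVec, Matrix.mul_nonsing_inv _ (isUnit_iff_ne_zero.2 (hMdet t)),
        Matrix.one_mulVec]
    have : M t *ᵥ v = v - c t • (N *ᵥ v) := by
      simp only [M, Matrix.sub_mulVec, Matrix.one_mulVec, Matrix.smul_mulVec]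
    rw [← h5, this]
    abel

theorem dotProduct_self_nn {n : ℕ} (x : Fin n → ℝ) : 0 ≤ x ⬝ᵥ x :=
  Finset.sum_nonneg fun i _ => mul_self_nonneg (x i)

theorem lyap_strict {n : ℕ} (T : Module.End ℝ (Matrix (Fin n) (Fin n) ℝ))
    (hpos : ∀ X, Qnn X → Qnn (T X))
    (hinj : ∀ t : ℝ, 0 ≤ t → t ≤ 1 → ∀ Y, Y = t • T Y → Y = 0)
    (W : Matrix (Fin n) (Fin n) ℝ) (hW : Qnn W) (ε : ℝ) (hε : 0 < ε) :
    ∃ X, X = T X + (W + ε • 1) ∧ Qnn X := by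
  let c : ℝ → ℝ := fun t => max 0 (min t 1)
  have hc : Continuous c := by fun_prop
  have hc0 : ∀ t, 0 ≤ c t := fun t => le_max_left _ _
  have hc1 : ∀ t, c t ≤ 1 := fun t => max_le zero_le_one (min_le_right _ _)
  obtain ⟨X, hX, hXe⟩ := exists_family T hinj c hc hc0 hc1 (W + ε • 1)
  have hform : ∀ x : Fin n → ℝ, x ⬝ᵥ ((ε • (1 : Matrix (Fin n) (Fin n) ℝ)) *ᵥ x) = ε * (x ⬝ᵥ x) := by
    intro x
    rw [Matrix.smul_mulVec, Matrix.one_mulVec, dotProduct_smul, smul_eq_mul]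
  have hVnn : Qnn (W + ε • (1 : Matrix (Fin n) (Fin n) ℝ)) := by
    refine hW.add fun x => ?_
    rw [hform]
    exact mul_nonneg hε.le (dotProduct_self_nn x)
  have hclopen : IsClopen {t | Qnn (X t)} := by
    constructor
    · have : {t | Qnn (X t)} = ⋂ x : Fin n → ℝ, {t | 0 ≤ x ⬝ᵥ (X t *ᵥ x)} := by
        ext t; simp [Qnn]
      rw [this]
      refine isClosed_iInter fun x => isClosed_le continuous_const ?_
      exact continuous_const.dotProduct (hX.matrix_mulVec continuous_const)
    · rw [isOpen_iff_mem_nhds]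
      intro t ht
      have hcont : Continuous fun s => ∑ i, ∑ j, |(X s - X t) i j| := by
        refine continuous_finsetSum _ fun i _ => continuous_finsetSum _ fun j _ => ?_
        exact ((hX.sub continuous_const).matrix_elem i j).abs
      have h0 : ∑ i, ∑ j, |(X t - X t) i j| < ε := by simpa using hε
      filter_upwards [hcont.continuousAt.eventually (gt_mem_nhds h0)] with s hs
      intro x
      have h1 := qform_lower (X s - X t) x
      have h2 : ε * (x ⬝ᵥ x) ≤ x ⬝ᵥ (X t *ᵥ x) := by
        have h3 := ((hpos _ ht).smul (hc0 t)).add hW x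
        rw [hXe t, ← add_assoc, Matrix.add_mulVec, dotProduct_add, hform]
        linarith
      have h4 : x ⬝ᵥ (X s *ᵥ x) = x ⬝ᵥ (X t *ᵥ x) + x ⬝ᵥ ((X s - X t) *ᵥ x) := by
        rw [Matrix.sub_mulVec, dotProduct_sub]; ring
      rw [h4]
      nlinarith [dotProduct_self_nn x]
  have huniv := hclopen.eq_univ ⟨0, by
    have h := hXe 0
    have : c 0 = 0 := by simp [c]
    rw [this, zero_smul, zero_add] at h
    show Qnn (X 0)
    rw [h]; exact hVnn⟩
  refine ⟨X 1, ?_, ?_⟩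
  · have h := hXe 1
    have h1 : c 1 = 1 := by simp [c]
    rwa [h1, one_smul] at h
  · have : (1 : ℝ) ∈ {t | Qnn (X t)} := huniv ▸ Set.mem_univ _
    exact this

theorem lyap_nn {n : ℕ} (T : Module.End ℝ (Matrix (Fin n) (Fin n) ℝ))
    (hpos : ∀ X, Qnn X → Qnn (T X))
    (hinj : ∀ t : ℝ, 0 ≤ t → t ≤ 1 → ∀ Y, Y = t • T Y → Y = 0)
    (W : Matrix (Fin n) (Fin n) ℝ) (hW : Qnn W) (X : Matrix (Fin n) (Fin n) ℝ)
    (hX : X = T X + W) : Qnn X := by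
  have hz : Qnn (0 : Matrix (Fin n) (Fin n) ℝ) := fun x => by simp
  obtain ⟨Z, hZ, hZn⟩ := lyap_strict T hpos hinj 0 hz 1 one_pos
  rw [zero_add, one_smul] at hZ
  have hall : ∀ ε : ℝ, 0 < ε → Qnn (X + ε • Z) := by
    intro ε hε
    obtain ⟨Y, hY, hYn⟩ := lyap_strict T hpos hinj W hW ε hε
    have : Y - (X + ε • Z) = 0 := by
      apply hinj 1 zero_le_one le_rfl
      rw [one_smul, map_sub, map_add, map_smul]
      have e1 : T Y = Y - (W + ε • 1) := eq_sub_of_add_eq hY.symm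
      have e2 : T X = X - W := eq_sub_of_add_eq hX.symm
      have e3 : T Z = Z - 1 := eq_sub_of_add_eq hZ.symm
      rw [e1, e2, e3, smul_sub]
      abel
    rw [← sub_eq_zero.1 this]
    exact hYn
  intro x
  have h : ∀ ε : ℝ, 0 < ε → 0 ≤ x ⬝ᵥ (X *ᵥ x) + ε * (x ⬝ᵥ (Z *ᵥ x)) := by
    intro ε hε
    have := hall ε hε x
    rwa [Matrix.add_mulVec, dotProduct_add, Matrix.smul_mulVec, dotProduct_smul, smul_eq_mul] at this
  by_contra hneg
  push Not at hneg
  have hz := hZn x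
  set a := x ⬝ᵥ (X *ᵥ x)
  set z := x ⬝ᵥ (Z *ᵥ x)
  have h1 := h (-a / (2 * (z + 1))) (by apply div_pos <;> linarith)
  have h2 : -a / (2 * (z + 1)) * z ≤ -a / 2 := by
    rw [div_mul_eq_mul_div, div_le_div_iff₀ (by linarith) (by norm_num)]
    nlinarith
  linarith

section
variable {n m p q : ℕ}
    (A : Matrix (Fin n) (Fin n) ℝ) (A' : Fin p → Matrix (Fin n) (Fin n) ℝ)
    (B : Matrix (Fin n) (Fin m) ℝ) (B' : Fin q → Matrix (Fin n) (Fin m) ℝ)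
    (al : Fin p → ℝ) (be : Fin q → ℝ) (L : Matrix (Fin m) (Fin n) ℝ)

theorem calT_apply (X : Matrix (Fin n) (Fin n) ℝ) : calT A A' B B' al be L X =
    (A + B * L) * X * (A + B * L)ᵀ + ∑ i, al i • (A' i * X * (A' i)ᵀ) +
      ∑ j, be j • ((B' j * L) * X * (B' j * L)ᵀ) := by
  simp [calT, sandwich, LinearMap.sum_apply, Matrix.mul_assoc]

theorem calTstar_apply (X : Matrix (Fin n) (Fin n) ℝ) : calTstar A A' B B' al be L X =
    (A + B * L)ᵀ * X * (A + B * L) + ∑ i, al i • ((A' i)ᵀ * X * A' i) +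
      ∑ j, be j • ((B' j * L)ᵀ * X * (B' j * L)) := by
  simp only [calTstar, sandwich, LinearMap.sum_apply, Matrix.mul_assoc, LinearMap.add_apply,
    LinearMap.smul_apply, LinearMap.comp_apply, LinearMap.mulLeft_apply, LinearMap.mulRight_apply,
    Matrix.transpose_transpose]

theorem calTstar_transpose (X : Matrix (Fin n) (Fin n) ℝ) :
    (calTstar A A' B B' al be L X)ᵀ = calTstar A A' B B' al be L Xᵀ := by
  simp only [calTstar_apply, Matrix.transpose_add, Matrix.transpose_sum, Matrix.transpose_smul,
    Matrix.transpose_mul, Matrix.transpose_transpose, Matrix.mul_assoc]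

theorem trace_adj (X Y : Matrix (Fin n) (Fin n) ℝ) :
    (calT A A' B B' al be L X * Y).trace = (X * calTstar A A' B B' al be L Y).trace := by
  have h : ∀ M : Matrix (Fin n) (Fin n) ℝ, (M * X * Mᵀ * Y).trace = (X * (Mᵀ * Y * M)).trace := by
    intro M
    rw [Matrix.mul_assoc, Matrix.mul_assoc, Matrix.trace_mul_comm]
    simp only [Matrix.mul_assoc]
  rw [calT_apply, calTstar_apply, Matrix.add_mul, Matrix.add_mul _ _ Y, Matrix.mul_add,
    Matrix.mul_add X, Matrix.trace_add, Matrix.trace_add, Matrix.trace_add, Matrix.trace_add, h]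
  simp only [Matrix.sum_mul, Matrix.mul_sum, Matrix.trace_sum, Matrix.smul_mul, Matrix.mul_smul,
    Matrix.trace_smul, h]

theorem calTstar_inj (hL : Admissible A A' B B' al be L) (t : ℝ) (h0 : 0 ≤ t) (h1 : t ≤ 1)
    (Y : Matrix (Fin n) (Fin n) ℝ) (hY : Y = t • calTstar A A' B B' al be L Y) : Y = 0 := by
  rcases h0.eq_or_lt with rfl | h0
  · simpa using hY
  have hr : t⁻¹ ∈ resolventSet ℝ (calT A A' B B' al be L) := by
    apply spectrum.mem_resolventSet_of_spectralRadius_lt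
    refine lt_of_lt_of_le hL ?_
    rw [← ENNReal.coe_one, ENNReal.coe_le_coe, ← NNReal.coe_le_coe, coe_nnnorm, NNReal.coe_one,
      Real.norm_of_nonneg (inv_nonneg.2 h0.le)]
    exact (one_le_inv₀ h0).2 h1
  rw [spectrum.mem_resolventSet_iff, Module.End.isUnit_iff] at hr
  obtain ⟨X, hX⟩ := hr.2 Yᵀ
  have h2 : (Yᵀ * Y).trace = 0 := by
    rw [← hX, LinearMap.sub_apply, Module.algebraMap_end_apply, Matrix.sub_mul, Matrix.trace_sub,
      trace_adj, Matrix.smul_mul, Matrix.trace_smul]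
    nth_rewrite 1 [hY]
    rw [Matrix.mul_smul, Matrix.trace_smul, smul_smul, inv_mul_cancel₀ h0.ne', one_smul, sub_self]
  have h3 := Matrix.trace_conjTranspose_mul_self_eq_zero_iff (A := Y)
  rw [Matrix.conjTranspose_eq_transpose_of_trivial] at h3
  exact h3.1 h2

theorem calTstar_pos (hal : ∀ i, 0 ≤ al i) (hbe : ∀ j, 0 ≤ be j) 
    (X : Matrix (Fin n) (Fin n) ℝ) (hX : Qnn X) : Qnn (calTstar A A' B B' al be L X) := by
  rw [calTstar_apply]
  exact ((hX.congr _).add (Qnn.sum fun i => (hX.congr _).smul (hal i))).add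
    (Qnn.sum fun j => (hX.congr _).smul (hbe j))

theorem Qnn.of_psd {k : ℕ} {X : Matrix (Fin k) (Fin k) ℝ} (h : X.PosSemidef) : Qnn X := by
  intro x
  simpa using h.dotProduct_mulVec_nonneg x

theorem Qnn.psd {k : ℕ} {X : Matrix (Fin k) (Fin k) ℝ} (h : Qnn X) (hs : Xᵀ = X) :
    X.PosSemidef := by
  refine Matrix.PosSemidef.of_dotProduct_mulVec_nonneg ?_ fun x => by simpa using h x
  rw [Matrix.IsHermitian, Matrix.conjTranspose_eq_transpose_of_trivial, hs]

theorem complete_square (P : Matrix (Fin n) (Fin n) ℝ) (hP : Pᵀ = P)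
    (Q : Matrix (Fin n) (Fin n) ℝ) (R S : Matrix (Fin m) (Fin m) ℝ)
    (hS : S = R + Bᵀ * P * B + ∑ j, be j • ((B' j)ᵀ * P * B' j))
    (hSt : Sᵀ = S) (hSd : IsUnit S.det)
    (hSARE : P = Q + Aᵀ * P * A + (∑ i, al i • ((A' i)ᵀ * P * A' i)) -
      Aᵀ * P * B * S⁻¹ * (Bᵀ * P * A)) :
    calTstar A A' B B' al be L P + Q + Lᵀ * R * L - P =
      (L + S⁻¹ * (Bᵀ * P * A))ᵀ * S * (L + S⁻¹ * (Bᵀ * P * A)) := by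
  have e1 : (L + S⁻¹ * (Bᵀ * P * A))ᵀ * S * (L + S⁻¹ * (Bᵀ * P * A)) =
      Lᵀ * S * L + Lᵀ * (Bᵀ * P * A) + (Aᵀ * P * B) * L +
        Aᵀ * P * B * S⁻¹ * (Bᵀ * P * A) := by
    have ht : (L + S⁻¹ * (Bᵀ * P * A))ᵀ = Lᵀ + Aᵀ * P * B * S⁻¹ := by
      simp only [Matrix.transpose_add, Matrix.transpose_mul, Matrix.transpose_nonsing_inv, hSt, hP,
        Matrix.transpose_transpose, Matrix.mul_assoc]
    have hc : ∀ Z : Matrix (Fin m) (Fin n) ℝ, S * (S⁻¹ * Z) = Z := fun Z => by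
      rw [← Matrix.mul_assoc, Matrix.mul_nonsing_inv _ hSd, Matrix.one_mul]
    have hc' : ∀ Z : Matrix (Fin m) (Fin n) ℝ, S⁻¹ * (S * Z) = Z := fun Z => by
      rw [← Matrix.mul_assoc, Matrix.nonsing_inv_mul _ hSd, Matrix.one_mul]
    rw [ht]
    simp only [Matrix.add_mul, Matrix.mul_add, Matrix.mul_assoc, hc, hc']
    abel
  have e2 : Lᵀ * S * L = Lᵀ * R * L + Lᵀ * (Bᵀ * P * B) * L +
      ∑ j, be j • ((B' j * L)ᵀ * P * (B' j * L)) := by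
    rw [hS]
    simp only [Matrix.add_mul, Matrix.mul_add, Matrix.mul_sum, Matrix.sum_mul, Matrix.mul_smul,
      Matrix.smul_mul, Matrix.transpose_mul, Matrix.mul_assoc]
  have e3 : (A + B * L)ᵀ * P * (A + B * L) = Aᵀ * P * A + Lᵀ * (Bᵀ * P * A) + (Aᵀ * P * B) * L
      + Lᵀ * (Bᵀ * P * B) * L := by
    simp only [Matrix.transpose_add, Matrix.transpose_mul, Matrix.add_mul, Matrix.mul_add,
      Matrix.mul_assoc]
    abel
  rw [e1, e2, calTstar_apply, e3]
  have e4 : Aᵀ * P * B * S⁻¹ * (Bᵀ * P * A) =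
      Q + Aᵀ * P * A + (∑ i, al i • ((A' i)ᵀ * P * A' i)) - P := by
    rw [eq_sub_iff_add_eq, ← eq_sub_iff_add_eq']; exact hSARE
  rw [e4]
  abel

end

theorem stmt10 {n m p q : ℕ} (hn : 0 < n) (hm : 0 < m)
    (A : Matrix (Fin n) (Fin n) ℝ) (A' : Fin p → Matrix (Fin n) (Fin n) ℝ)
    (B : Matrix (Fin n) (Fin m) ℝ) (B' : Fin q → Matrix (Fin n) (Fin m) ℝ)
    (al : Fin p → ℝ) (be : Fin q → ℝ) (hal : ∀ i, 0 ≤ al i) (hbe : ∀ j, 0 ≤ be j)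
    (Q : Matrix (Fin n) (Fin n) ℝ) (hQ : Q.PosSemidef)
    (R : Matrix (Fin m) (Fin m) ℝ) (hR : R.PosDef)
    (D : Matrix (Fin n) (Fin n) ℝ) (hD : D.PosDef)
    (Pstar : Matrix (Fin n) (Fin n) ℝ) (hPstar : Pstar.PosSemidef)
    (hSARE : Pstar = Q + Aᵀ * Pstar * A + (∑ i, al i • ((A' i)ᵀ * Pstar * A' i)) -
      Aᵀ * Pstar * B *
        (R + Bᵀ * Pstar * B + ∑ j, be j • ((B' j)ᵀ * Pstar * B' j))⁻¹ *
        (Bᵀ * Pstar * A)) :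
    ∀ L : Matrix (Fin m) (Fin n) ℝ, Admissible A A' B B' al be L →
      ∀ P : Matrix (Fin n) (Fin n) ℝ,
        P = calTstar A A' B B' al be L P + Q + Lᵀ * R * L →
        (P - Pstar).PosSemidef ∧ (Pstar * D).trace ≤ (P * D).trace := by
  intro L hL P hP
  have hPt : Pstarᵀ = Pstar := by
    rw [← Matrix.conjTranspose_eq_transpose_of_trivial]; exact hPstar.1
  have hcp : ∀ {k : ℕ} (M : Matrix (Fin n) (Fin k) ℝ), (Mᵀ * Pstar * M).PosSemidef := by
    intro k M
    have := hPstar.conjTranspose_mul_mul_same M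
    rwa [Matrix.conjTranspose_eq_transpose_of_trivial] at this
  have hSpd : (R + Bᵀ * Pstar * B + ∑ j, be j • ((B' j)ᵀ * Pstar * B' j)).PosDef := by
    refine (hR.add_posSemidef (hcp B)).add_posSemidef ?_
    exact Matrix.posSemidef_sum _ fun j _ => (hcp (B' j)).smul (hbe j)
  have hcs := complete_square A A' B B' al be L Pstar hPt Q R _ rfl
    (by rw [← Matrix.conjTranspose_eq_transpose_of_trivial]; exact hSpd.1)
    (isUnit_iff_ne_zero.2 hSpd.det_pos.ne') hSARE
  have hinj := calTstar_inj A A' B B' al be L hL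
  have hW := (Qnn.of_psd hSpd.posSemidef).congr (L + (R + Bᵀ * Pstar * B +
    ∑ j, be j • ((B' j)ᵀ * Pstar * B' j))⁻¹ * (Bᵀ * Pstar * A))
  rw [← hcs] at hW
  have hq : Qnn (P - Pstar) := by
    refine lyap_nn (calTstar A A' B B' al be L) (calTstar_pos A A' B B' al be L hal hbe) hinj
      _ hW _ ?_
    rw [map_sub]
    nth_rewrite 1 [hP]
    abel
  have hQt : Qᵀ = Q := by rw [← Matrix.conjTranspose_eq_transpose_of_trivial]; exact hQ.1
  have hRt : Rᵀ = R := by rw [← Matrix.conjTranspose_eq_transpose_of_trivial]; exact hR.1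
  have hPsym : Pᵀ = P := by
    rw [← sub_eq_zero]
    apply hinj 1 zero_le_one le_rfl
    rw [one_smul, map_sub, ← calTstar_transpose]
    have e := congrArg Matrix.transpose hP
    simp only [Matrix.transpose_add, Matrix.transpose_mul, Matrix.transpose_transpose, hQt, hRt] at e
    have e1 : Pᵀ - (calTstar A A' B B' al be L P)ᵀ = Q + Lᵀ * (R * L) := by
      rw [sub_eq_iff_eq_add', ← add_assoc]; exact e
    have e2 : P - calTstar A A' B B' al be L P = Q + Lᵀ * (R * L) := by
      rw [sub_eq_iff_eq_add', ← add_assoc, ← Matrix.mul_assoc]; exact hP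
    rw [sub_eq_sub_iff_sub_eq_sub, e1, e2]
  have hpsd : (P - Pstar).PosSemidef := hq.psd (by rw [Matrix.transpose_sub, hPsym, hPt])
  refine ⟨hpsd, ?_⟩
  obtain ⟨k, v, hv⟩ := Matrix.posSemidef_iff_eq_sum_vecMulVec.1 hD.posSemidef
  rw [← sub_nonneg, ← Matrix.trace_sub, ← Matrix.sub_mul, hv, Matrix.mul_sum, Matrix.trace_sum]
  refine Finset.sum_nonneg fun i _ => ?_
  rw [Matrix.mul_vecMulVec, Matrix.trace_vecMulVec, dotProduct_comm]
  simpa using hq (v i)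
end
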